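/- arXiv:1006.2570 — 6 statements merged into one kernel-verified Lean document; each statement's English description precedes it below -/
import Mathlib

section
/- Let ∑_{i=1}^k εᵢ·2^{qᵢ} be a nonempty reduced binary sum without superfluous pairs, with value N and leading exponent q₁ ≥ 1. If ε₁ = 1 then N ≥ 2^{q₁−1} + 1, and if ε₁ = −1 then N ≤ −2^{q₁−1} − 1. -/
/-- A reduced binary sum has no superfluous pairs: no two consecutive terms satisfy
`q i = q (i+1) + 1` and `ε i = -ε (i+1)`. -/
def NoSuperfluousPairs (k : ℕ) (ε : Fin k → ℤ) (q : Fin k → ℕ) : Prop :=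
  ∀ (i : ℕ) (h : i + 1 < k),
    ¬(q ⟨i, Nat.lt_of_succ_lt h⟩ = q ⟨i + 1, h⟩ + 1 ∧
      ε ⟨i, Nat.lt_of_succ_lt h⟩ = -ε ⟨i + 1, h⟩)

theorem reduced_abs_bound (k : ℕ) : ∀ (m : ℕ) (ε : Fin k → ℤ) (q : Fin k → ℕ)
    (_ : ∀ i, ε i = 1 ∨ ε i = -1) (_ : StrictAnti q) (_ : ∀ i, q i < m),
    (∑ i, ε i * 2 ^ q i) ≤ 2 ^ m - 1 ∧ -(2 ^ m - 1) ≤ ∑ i, ε i * 2 ^ q i := by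
  induction k with
  | zero =>
    intro m ε q _ _ _
    have : (1 : ℤ) ≤ 2 ^ m := one_le_pow₀ (by norm_num)
    simp
    omega
  | succ n ih =>
    intro m ε q hε hq hm
    have h := ih (q 0) (fun i => ε i.succ) (fun i => q i.succ) (fun i => hε _)
      (fun a b hab => hq (Fin.succ_lt_succ_iff.mpr hab)) (fun i => hq (Fin.succ_pos i))
    rw [Fin.sum_univ_succ]
    have h2 : (2 : ℤ) ^ (q 0 + 1) ≤ 2 ^ m := pow_le_pow_right₀ (by norm_num) (hm 0)
    rw [pow_succ] at h2
    rcases hε 0 with h0 | h0 <;> rw [h0] <;> constructor <;> linarith [h.1, h.2]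

/-- For a nonempty reduced binary sum without superfluous pairs, with value `N` and
leading exponent `q₁ ≥ 1`: if `ε₁ = 1` then `N ≥ 2^(q₁-1) + 1`, and if `ε₁ = -1`
then `N ≤ -2^(q₁-1) - 1`. -/
theorem reduced_no_superfluous_leading_bound
    (k : ℕ) (hk : 0 < k) (ε : Fin k → ℤ) (q : Fin k → ℕ)
    (hε : ∀ i, ε i = 1 ∨ ε i = -1)
    (hq : StrictAnti q)
    (hs : NoSuperfluousPairs k ε q)
    (hq1 : 1 ≤ q ⟨0, hk⟩) :
    (ε ⟨0, hk⟩ = 1 → 2 ^ (q ⟨0, hk⟩ - 1) + 1 ≤ ∑ i, ε i * 2 ^ q i) ∧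
    (ε ⟨0, hk⟩ = -1 → (∑ i, ε i * 2 ^ q i) ≤ -(2 ^ (q ⟨0, hk⟩ - 1)) - 1) := by
  obtain ⟨n, rfl⟩ : ∃ n, k = n + 1 := ⟨k - 1, by omega⟩
  change 1 ≤ q 0 at hq1
  change (ε 0 = 1 → 2 ^ (q 0 - 1) + 1 ≤ ∑ i, ε i * 2 ^ q i) ∧
    (ε 0 = -1 → (∑ i, ε i * 2 ^ q i) ≤ -(2 ^ (q 0 - 1)) - 1)
  obtain ⟨p, hp⟩ : ∃ p, q 0 = p + 1 := ⟨q 0 - 1, by omega⟩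
  have hpos : (1 : ℤ) ≤ 2 ^ p := one_le_pow₀ (by norm_num)
  have hsub : q 0 - 1 = p := by omega
  have hpow : (2 : ℤ) ^ q 0 = 2 ^ p * 2 := by rw [hp, pow_succ]
  rw [hsub, Fin.sum_univ_succ, hpow]
  have hqs : StrictAnti (fun i : Fin n => q i.succ) :=
    fun a b hab => hq (Fin.succ_lt_succ_iff.mpr hab)
  by_cases hc : ∀ i : Fin n, q i.succ < p
  · have h := reduced_abs_bound n p (fun i => ε i.succ) (fun i => q i.succ)
      (fun i => hε _) hqs hc
    constructor <;> intro h0 <;> rw [h0] <;> linarith [h.1, h.2]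
  · push Not at hc
    obtain ⟨j, hj⟩ := hc
    obtain ⟨r, rfl⟩ : ∃ r, n = r + 1 := ⟨n - 1, by have := j.2; omega⟩
    have h1 : q (Fin.succ 0) < q 0 := hq (Fin.succ_pos 0)
    have h2 : q j.succ ≤ q (Fin.succ 0) := hqs.antitone (Fin.zero_le j)
    have h3 : q (Fin.succ 0) = p := by omega
    have hs0 : ¬ (q 0 = q (Fin.succ 0) + 1 ∧ ε 0 = - ε (Fin.succ 0)) := hs 0 (by omega)
    have hne : ε 0 ≠ - ε (Fin.succ 0) := fun h => hs0 ⟨by omega, h⟩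
    have h := reduced_abs_bound r p (fun i => ε i.succ.succ) (fun i => q i.succ.succ)
      (fun i => hε _) (fun a b hab => hqs (Fin.succ_lt_succ_iff.mpr hab))
      (fun i => h3 ▸ hqs (Fin.succ_pos i))
    rw [Fin.sum_univ_succ, h3]
    constructor <;> intro h0
    · have h4 : ε (Fin.succ 0) = 1 := by
        rcases hε (Fin.succ 0) with h | h
        · exact h
        · exact absurd (by rw [h0, h]; norm_num) hne
      rw [h0, h4]; linarith [h.1, h.2]
    · have h4 : ε (Fin.succ 0) = -1 := by
        rcases hε (Fin.succ 0) with h | h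
        · exact absurd (by rw [h0, h]) hne
        · exact h
      rw [h0, h4]; linarith [h.1, h.2]
end

section
/- A compact binary sum has the least possible number of terms among all binary sums with the same value: if N is a nonzero integer whose compact binary sum representation has k terms, and N = ∑_{j=1}^m δⱼ·2^{pⱼ} is any binary sum with value N (δⱼ ∈ {−1, 1}, exponents pⱼ ∈ ℕ arbitrary, repetitions allowed), then m ≥ k. -/
/-- A binary sum, as a list of (coefficient, exponent) pairs; its value. -/
def binVal (l : List (ℤ × ℕ)) : ℤ := (l.map fun p => p.1 * 2 ^ p.2).sum

/-- All coefficients belong to `{-1, 1}`. -/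
def GoodCoeffs (l : List (ℤ × ℕ)) : Prop := ∀ p ∈ l, p.1 = 1 ∨ p.1 = -1

/-- A binary sum is compact if its exponents are strictly decreasing with consecutive
gaps at least 2. -/
def Compact (l : List (ℤ × ℕ)) : Prop := l.Chain' fun a b => b.2 + 2 ≤ a.2

/-- The weight of the non-adjacent form of an integer. -/
def nafW (n : ℤ) : ℕ :=
  if h0 : n = 0 then 0
  else if h1 : n % 2 = 0 then nafW (n / 2)
  else if h2 : n % 4 = 1 then nafW ((n - 1) / 4) + 1
  else nafW ((n + 1) / 4) + 1
termination_by n.natAbs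
decreasing_by all_goals omega

theorem nafW_zero : nafW 0 = 0 := by
  rw [nafW]; simp

theorem nafW_two (n : ℤ) : nafW (2 * n) = nafW n := by
  by_cases h : n = 0
  · subst h; simp
  · rw [nafW, dif_neg (by omega), dif_pos (by omega)]
    congr 1; omega

theorem nafW_one (n : ℤ) : nafW (4 * n + 1) = nafW n + 1 := by
  rw [nafW, dif_neg (by omega), dif_neg (by omega), dif_pos (by omega)]
  congr 2; omega

theorem nafW_neg (n : ℤ) : nafW (4 * n - 1) = nafW n + 1 := by
  rw [nafW, dif_neg (by omega), dif_neg (by omega), dif_neg (by omega)]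
  congr 2; omega

theorem nafW_three (n : ℤ) : nafW (4 * n + 3) = nafW (n + 1) + 1 := by
  rw [← nafW_neg]; congr 1; ring

theorem nafW_pow (q : ℕ) (n : ℤ) : nafW (2 ^ q * n) = nafW n := by
  induction q with
  | zero => simp
  | succ q ih => rw [pow_succ', mul_assoc, nafW_two, ih]

theorem nafW_succ (k : ℕ) : ∀ n : ℤ, n.natAbs + (n + 1).natAbs ≤ k →
    nafW (n + 1) ≤ nafW n + 1 ∧ nafW n ≤ nafW (n + 1) + 1 := by
  induction k using Nat.strong_induction_on with
  | _ k IH =>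
  intro n hn
  by_cases hs : n = 0
  · subst hs
    have := nafW_one 0
    norm_num at this
    simp [nafW_zero, this]
  by_cases hs' : n = -1
  · subst hs'
    have := nafW_neg 0
    norm_num at this
    simp [nafW_zero, this]
  have key : ∀ j : ℤ, j.natAbs + (j + 1).natAbs < k →
      nafW (j + 1) ≤ nafW j + 1 ∧ nafW j ≤ nafW (j + 1) + 1 :=
    fun j hj => IH _ hj j le_rfl
  have e2 : ∀ m : ℤ, nafW (2 * m + 2) = nafW (m + 1) := fun m => by
    rw [← nafW_two (m + 1)]; congr 1; ring
  have e42 : ∀ m : ℤ, nafW (4 * m + 2) = nafW (2 * m + 1) := fun m => by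
    rw [← nafW_two (2 * m + 1)]; congr 1; ring
  have e4 : ∀ m : ℤ, nafW (4 * m) = nafW m := fun m => by
    rw [← nafW_two m, ← nafW_two (2 * m)]; congr 1; ring
  have e44 : ∀ m : ℤ, nafW (4 * m + 4) = nafW (m + 1) := fun m => by
    rw [← e4 (m + 1)]; congr 1; ring
  obtain ⟨m, hm | hm | hm | hm⟩ : ∃ m : ℤ, n = 4 * m ∨ n = 4 * m + 1 ∨ n = 4 * m + 2 ∨
      n = 4 * m + 3 := ⟨n / 4, by omega⟩ <;> subst hm
  · rw [nafW_one, e4]; omega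
  · rw [nafW_one, show 4 * m + 1 + 1 = 4 * m + 2 by ring, e42]
    have h1 := key (2 * m) (by omega)
    rw [nafW_two] at h1
    obtain ⟨j, hj | hj⟩ : ∃ j : ℤ, m = 2 * j ∨ m = 2 * j + 1 := ⟨m / 2, by omega⟩
    · have h2 := key (2 * j) (by omega)
      have h3 := nafW_one j
      have h4 := nafW_two j
      rw [show 4 * j + 1 = 2 * m + 1 by omega] at h3
      rw [← hj] at h2 h4
      omega
    · have h2 := key (2 * j + 1) (by omega)
      have h3 := nafW_three j
      have h4 := e2 j
      rw [show 4 * j + 3 = 2 * m + 1 by omega] at h3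
      rw [show 2 * j + 2 = m + 1 by omega] at h4
      rw [← hj] at h2
      omega
  · rw [show 4 * m + 2 + 1 = 4 * m + 3 by ring, nafW_three, e42]
    have h1 := key (2 * m + 1) (by omega)
    rw [show 2 * m + 1 + 1 = 2 * m + 2 by ring, e2] at h1
    obtain ⟨j, hj | hj⟩ : ∃ j : ℤ, m = 2 * j ∨ m = 2 * j + 1 := ⟨m / 2, by omega⟩
    · have h2 := key (2 * j) (by omega)
      have h3 := nafW_one j
      have h4 := nafW_two j
      rw [show 4 * j + 1 = 2 * m + 1 by omega] at h3
      rw [← hj] at h2 h4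
      omega
    · have h2 := key (2 * j + 1) (by omega)
      have h3 := nafW_three j
      have h4 := e2 j
      rw [show 4 * j + 3 = 2 * m + 1 by omega] at h3
      rw [show 2 * j + 2 = m + 1 by omega] at h4
      rw [← hj] at h2
      omega
  · rw [show 4 * m + 3 + 1 = 4 * m + 4 by ring, nafW_three, e44]
    omega

theorem nafW_add_pow (q : ℕ) : ∀ n : ℤ,
    nafW (n + 2 ^ q) ≤ nafW n + 1 ∧ nafW n ≤ nafW (n + 2 ^ q) + 1 := by
  induction q using Nat.strong_induction_on with
  | _ q IH =>
  intro n
  match q, IH with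
  | 0, _ => simpa using nafW_succ _ n le_rfl
  | 1, _ =>
    obtain ⟨m, hm | hm | hm⟩ : ∃ m : ℤ, n = 2 * m ∨ n = 4 * (m / 2) + 1 ∨
      n = 4 * (m / 2) - 1 := by
      obtain h | h | h : n % 2 = 0 ∨ n % 4 = 1 ∨ n % 4 = 3 := by omega
      · exact ⟨n / 2, by omega⟩
      · exact ⟨2 * (n / 4), by omega⟩
      · exact ⟨2 * (n / 4) + 2, by omega⟩
    · subst hm
      rw [pow_one, show 2 * m + 2 = 2 * (m + 1) by ring, nafW_two, nafW_two]
      exact nafW_succ _ m le_rfl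
    · generalize m / 2 = j at hm
      subst hm
      rw [pow_one, show 4 * j + 1 + 2 = 4 * j + 3 by ring, nafW_three, nafW_one]
      have := nafW_succ _ j le_rfl
      omega
    · generalize m / 2 = j at hm
      subst hm
      rw [pow_one, show 4 * j - 1 + 2 = 4 * j + 1 by ring, nafW_neg, nafW_one]
      omega
  | q + 2, IH =>
    obtain h | h | h : n % 2 = 0 ∨ n % 4 = 1 ∨ n % 4 = 3 := by omega
    · obtain ⟨m, rfl⟩ : ∃ m, n = 2 * m := ⟨n / 2, by omega⟩
      rw [show 2 * m + 2 ^ (q + 2) = 2 * (m + 2 ^ (q + 1)) by ring, nafW_two, nafW_two]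
      exact IH (q + 1) (by omega) m
    · obtain ⟨m, rfl⟩ : ∃ m, n = 4 * m + 1 := ⟨n / 4, by omega⟩
      rw [show 4 * m + 1 + 2 ^ (q + 2) = 4 * (m + 2 ^ q) + 1 by ring, nafW_one, nafW_one]
      have := IH q (by omega) m
      omega
    · obtain ⟨m, rfl⟩ : ∃ m, n = 4 * m - 1 := ⟨n / 4 + 1, by omega⟩
      rw [show 4 * m - 1 + 2 ^ (q + 2) = 4 * (m + 2 ^ q) - 1 by ring, nafW_neg, nafW_neg]
      have := IH q (by omega) m
      omega

theorem nafW_le_length (l : List (ℤ × ℕ)) (h : GoodCoeffs l) :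
    nafW (binVal l) ≤ l.length := by
  induction l with
  | nil => simp [binVal, nafW_zero]
  | cons p t ih =>
    have ht := ih fun x hx => h x (List.mem_cons_of_mem _ hx)
    have hv : binVal (p :: t) = p.1 * 2 ^ p.2 + binVal t := by simp [binVal]
    rw [hv, List.length_cons]
    rcases h p List.mem_cons_self with hp | hp
    · rw [hp, one_mul, add_comm]
      have := nafW_add_pow p.2 (binVal t)
      omega
    · have := nafW_add_pow p.2 (p.1 * 2 ^ p.2 + binVal t)
      rw [show p.1 * 2 ^ p.2 + binVal t + 2 ^ p.2 = binVal t by rw [hp]; ring] at this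
      omega

theorem nafW_compact (L : List (ℤ × ℕ)) (h : GoodCoeffs L)
    (hp : L.Pairwise fun a b => a.2 + 2 ≤ b.2) :
    ∀ s : ℕ, (∀ p ∈ L, s ≤ p.2) → ∃ m : ℤ, binVal L = 2 ^ s * m ∧ nafW m = L.length := by
  induction L with
  | nil => exact fun s _ => ⟨0, by simp [binVal], by simp [nafW_zero]⟩
  | cons p t ih =>
    intro s hs
    rw [List.pairwise_cons] at hp
    obtain ⟨m, hm, hw⟩ := ih (fun x hx => h x (List.mem_cons_of_mem _ hx)) hp.2 (p.2 + 2) hp.1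
    have hv : binVal (p :: t) = p.1 * 2 ^ p.2 + binVal t := by simp [binVal]
    obtain ⟨d, hd⟩ := Nat.exists_eq_add_of_le (hs p List.mem_cons_self)
    refine ⟨2 ^ d * (4 * m + p.1), ?_, ?_⟩
    · rw [hv, hm, hd]; ring
    · rw [nafW_pow, List.length_cons, ← hw]
      rcases h p List.mem_cons_self with hp | hp
      · rw [hp, nafW_one]
      · rw [hp, ← sub_eq_add_neg, nafW_neg]

/-- A compact binary sum has the least possible number of terms among all binary
sums (arbitrary exponents, repetitions allowed) with the same nonzero value. -/
theorem compact_binary_sum_minimal (N : ℤ) (hN : N ≠ 0)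
    (lc : List (ℤ × ℕ)) (hc1 : GoodCoeffs lc) (hc2 : Compact lc) (hc3 : binVal lc = N)
    (l : List (ℤ × ℕ)) (hl1 : GoodCoeffs l) (hl2 : binVal l = N) :
    lc.length ≤ l.length := by
  have hpw : lc.Pairwise fun a b => b.2 + 2 ≤ a.2 := by
    have : IsTrans (ℤ × ℕ) (fun a b => b.2 + 2 ≤ a.2) :=
      ⟨fun a b c h1 h2 => by omega⟩
    exact List.isChain_iff_pairwise.mp hc2
  obtain ⟨m, hm, hw⟩ := nafW_compact lc.reverse
    (fun x hx => hc1 x (List.mem_reverse.mp hx)) (List.pairwise_reverse.mpr hpw) 0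
    (fun _ _ => Nat.zero_le _)
  have hr : binVal lc.reverse = binVal lc := by
    simp [binVal, List.sum_reverse]
  rw [hr, hc3, pow_zero, one_mul] at hm
  have := nafW_le_length l hl1
  rw [hl2, hm, hw, List.length_reverse] at this
  exact this
end

section
/- For every i ∈ ℕ, the number N_i = (4^{i+1} − 1)/3 satisfies N_i = ∑_{j=0}^{i} 2^{2j}; this binary sum is compact, and consequently every binary sum with value N_i (coefficients in {−1, 1}, exponents in ℕ, repetitions allowed) has at least i + 1 terms. -/
inductive NAFRep : ℤ → ℕ → Prop
  | zero (k : ℕ) : NAFRep 0 k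
  | even (n : ℤ) (k : ℕ) : NAFRep n k → NAFRep (2 * n) k
  | odd (n d : ℤ) (k : ℕ) : (d = 1 ∨ d = -1) → NAFRep n k → NAFRep (4 * n + d) (k + 1)

theorem NAFRep.mono {n : ℤ} {k : ℕ} (h : NAFRep n k) : NAFRep n (k + 1) := by
  induction h with
  | zero k => exact .zero _
  | even n k _ ih => exact .even _ _ ih
  | odd n d k hd _ ih => exact .odd _ _ _ hd ih

theorem NAFRep.unit (e : ℤ) (k : ℕ) (he : e = 1 ∨ e = -1) : NAFRep e (k + 1) := by
  simpa using NAFRep.odd 0 e k he (.zero k)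

theorem NAFRep.add {n : ℤ} {k : ℕ} (h : NAFRep n k) (e : ℤ) (he : e = 1 ∨ e = -1) :
    (∀ q : ℕ, NAFRep (n + e * 2 ^ q) (k + 1)) ∧ NAFRep (2 * n + e) (k + 1) := by
  induction h with
  | zero k =>
    refine ⟨fun q => ?_, by simpa using NAFRep.unit e k he⟩
    induction q with
    | zero => simpa using NAFRep.unit e k he
    | succ q ih =>
      convert NAFRep.even _ _ ih using 1
      ring
  | even n k hn ih =>
    refine ⟨fun q => ?_, ?_⟩
    · cases q with
      | zero => simpa using ih.2
      | succ q =>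
        convert NAFRep.even _ _ (ih.1 q) using 1
        ring
    · convert NAFRep.odd n e k he hn using 1
      ring
  | odd n d k hd hn ih =>
    have hde : d = e ∨ d = -e := by omega
    have hne : -e = 1 ∨ -e = -1 := by omega
    refine ⟨fun q => ?_, ?_⟩
    · match q with
      | 0 =>
        rcases hde with rfl | rfl
        · convert NAFRep.even _ _ ih.2.mono using 1
          ring
        · convert NAFRep.even _ _ (NAFRep.even _ _ hn.mono.mono) using 1
          ring
      | 1 =>
        rcases hde with rfl | rfl
        · convert NAFRep.odd _ _ _ hne (ih.1 0) using 1
          ring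
        · convert NAFRep.odd _ _ _ he hn.mono using 1
          ring
      | q + 2 =>
        convert NAFRep.odd _ _ _ hd (ih.1 q) using 1
        ring
    · rcases hde with rfl | rfl
      · convert NAFRep.odd _ _ _ hne ih.2 using 1
        ring
      · convert NAFRep.odd _ _ _ hne (NAFRep.even _ _ hn.mono) using 1
        ring

theorem NAFRep.of_list (l : List (ℤ × ℕ)) (hl : GoodCoeffs l) :
    NAFRep (binVal l) l.length := by
  induction l with
  | nil => exact .zero _
  | cons p l ih =>
    have h1 := ih fun x hx => hl x (List.mem_cons_of_mem _ hx)
    have h2 := (h1.add p.1 (hl p List.mem_cons_self)).1 p.2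
    simpa [binVal, add_comm] using h2

theorem sum_four_succ (i : ℕ) : ∑ j ∈ Finset.range (i + 1), (2 : ℤ) ^ (2 * j) =
    4 * (∑ j ∈ Finset.range i, (2 : ℤ) ^ (2 * j)) + 1 := by
  rw [Finset.sum_range_succ', Finset.mul_sum]
  congr 1
  exact Finset.sum_congr rfl fun j _ => by ring

theorem NAFRep.lower (i : ℕ) : ∀ k : ℕ,
    NAFRep (∑ j ∈ Finset.range i, (2 : ℤ) ^ (2 * j)) k → i ≤ k := by
  induction i with
  | zero => intro k _; omega
  | succ i ih =>
    intro k h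
    rw [sum_four_succ] at h
    generalize hS : ∑ j ∈ Finset.range i, (2 : ℤ) ^ (2 * j) = S at h ih
    generalize hm : 4 * S + 1 = m at h
    cases h with
    | zero => omega
    | even n k h => omega
    | odd n d k hd h =>
      have : n = S := by omega
      subst this
      have := ih _ h
      omega

/-- `N_i = (4^(i+1) - 1)/3 = ∑_{j=0}^{i} 2^(2j)`; the binary sum
`2^(2i) + 2^(2(i-1)) + ⋯ + 2^0` is compact, and consequently every binary sum
with value `N_i` has at least `i + 1` terms. -/
theorem N_i_needs_many_terms (i : ℕ) :
    3 * (∑ j ∈ Finset.range (i + 1), (2 : ℤ) ^ (2 * j)) = 4 ^ (i + 1) - 1 ∧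
    Compact ((List.range (i + 1)).map fun j => ((1 : ℤ), 2 * (i - j))) ∧
    binVal ((List.range (i + 1)).map fun j => ((1 : ℤ), 2 * (i - j))) =
      ∑ j ∈ Finset.range (i + 1), (2 : ℤ) ^ (2 * j) ∧
    (∀ l : List (ℤ × ℕ), GoodCoeffs l →
      binVal l = ∑ j ∈ Finset.range (i + 1), (2 : ℤ) ^ (2 * j) →
      i + 1 ≤ l.length) := by
  refine ⟨?_, ?_, ?_, ?_⟩
  · induction i with
    | zero => norm_num
    | succ i ih => rw [sum_four_succ, pow_succ]; linarith
  · unfold Compact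
    refine (List.isChain_map _).2 ?_
    refine List.isChain_iff_getElem.2 ?_
    intro j hj
    simp at hj ⊢
    omega
  · rw [← Finset.sum_range_reflect]
    simp [binVal, Finset.sum, Function.comp_def, Multiset.range]
  · intro l hl hv
    have h := NAFRep.of_list l hl
    rw [hv] at h
    exact NAFRep.lower _ _ h
end

section
/- For every proper constant power circuit P there exists a proper reduced constant power circuit P′ equivalent to P (that is, ℰ(P′) = ℰ(P)) with |V(P′)| ≤ |V(P)| + 1. -/
/-- A constant power circuit: a finite nonempty DAG without multiple edges, with
edge labels in `{-1, 1}`, a nonempty set `M` of marked vertices with signs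
`ν : M → {-1, 1}`, together with its evaluation function `eval`, which satisfies
the defining recursion: `eval v = 0` if `v` has no outgoing edges, and
`eval v = 2 ^ (∑ edges e = v→w, μ(e) · eval w)` otherwise.

Vertices are `Fin n`; `lab u v = 0` means there is no edge `u → v`, and
`lab u v = ±1` means there is an edge `u → v` labelled `±1` (this encodes both the
edge set and the labelling `μ`, and there are no multiple edges by construction).
Acyclicity is expressed by well-foundedness of the child relation, which also makes
`eval` the unique function satisfying `evalSpec`. -/
structure PowerCircuit where
  n : ℕ
  npos : 0 < n
  lab : Fin n → Fin n → ℤ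
  labValid : ∀ u v, lab u v = 0 ∨ lab u v = 1 ∨ lab u v = -1
  acyclic : WellFounded (fun u v : Fin n => lab v u ≠ 0)
  M : Finset (Fin n)
  Mne : M.Nonempty
  nu : Fin n → ℤ
  nuValid : ∀ v ∈ M, nu v = 1 ∨ nu v = -1
  eval : Fin n → ℝ
  evalSpec : ∀ v, eval v =
    if ∀ w, lab v w = 0 then 0
    else (2 : ℝ) ^ (∑ w, (lab v w : ℝ) * eval w)

namespace PowerCircuit

/-- The value `ℰ(P) = ∑_{v ∈ M} ν(v) · ℰ(v)` of a constant power circuit. -/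
noncomputable def value (P : PowerCircuit) : ℝ :=
  ∑ v ∈ P.M, (P.nu v : ℝ) * P.eval v

/-- A circuit is proper if every vertex evaluates to a natural number. -/
def Proper (P : PowerCircuit) : Prop := ∀ v, ∃ m : ℕ, P.eval v = m

/-- `P` properly represents the integer `N`. -/
def Represents (P : PowerCircuit) (N : ℤ) : Prop := P.Proper ∧ P.value = N

/-- A zero vertex: a vertex with no outgoing edges. -/
def IsZeroVertex (P : PowerCircuit) (v : Fin P.n) : Prop := ∀ w, P.lab v w = 0

/-- The trivial circuit consists of a single (marked) vertex. -/
def Trivial (P : PowerCircuit) : Prop := P.n = 1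

/-- Trimmed: every vertex is reachable from a marked vertex along a directed path. -/
def Trimmed (P : PowerCircuit) : Prop :=
  ∀ v, ∃ m ∈ P.M, Relation.ReflTransGen (fun a b => P.lab a b ≠ 0) m v

/-- Standard form: trimmed, exactly one zero vertex, the zero vertex is unmarked
unless the circuit is trivial, and no vertex with more than one outgoing edge has
an edge into the zero vertex. -/
def StandardForm (P : PowerCircuit) : Prop :=
  P.Trimmed ∧
  (∃! z, P.IsZeroVertex z) ∧
  (P.Trivial ∨ ∀ z, P.IsZeroVertex z → z ∉ P.M) ∧
  (∀ v z, P.IsZeroVertex z → P.lab v z ≠ 0 → ∀ w, P.lab v w ≠ 0 → w = z)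

/-- No redundant pair of edges: no two distinct edges `v → v₁`, `v → v₂` with
opposite labels and `ℰ(v₁) = ℰ(v₂)`. -/
def NoRedundantPairs (P : PowerCircuit) : Prop :=
  ∀ v v₁ v₂ : Fin P.n, v₁ ≠ v₂ → P.lab v v₁ ≠ 0 → P.lab v v₂ ≠ 0 →
    P.lab v v₁ = -P.lab v v₂ → P.eval v₁ ≠ P.eval v₂

/-- No superfluous pair of edges: no two distinct edges `v → v₁`, `v → v₂` with
opposite labels and `ℰ(v₁) = 2 ℰ(v₂)`. -/
def NoSuperfluousPairs (P : PowerCircuit) : Prop :=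
  ∀ v v₁ v₂ : Fin P.n, v₁ ≠ v₂ → P.lab v v₁ ≠ 0 → P.lab v v₂ ≠ 0 →
    P.lab v v₁ = -P.lab v v₂ → P.eval v₁ ≠ 2 * P.eval v₂

/-- Reduced: standard form, distinct vertices have distinct evaluations, and no
redundant or superfluous pairs of edges. -/
def Reduced (P : PowerCircuit) : Prop :=
  P.StandardForm ∧ (∀ v₁ v₂ : Fin P.n, P.eval v₁ = P.eval v₂ → v₁ = v₂) ∧
  P.NoRedundantPairs ∧ P.NoSuperfluousPairs

/-- Normal form: proper and reduced; for every vertex all of whose out-edges lead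
to non-zero vertices, the numbers `log₂ ℰ(β(e))` pairwise differ by at least `2`;
and, unless the circuit is trivial, the numbers `log₂ ℰ(v)`, `v ∈ M`, pairwise
differ by at least `2`. -/
def NormalForm (P : PowerCircuit) : Prop :=
  P.Proper ∧ P.Reduced ∧
  (∀ v : Fin P.n, (∀ w, P.lab v w ≠ 0 → ¬P.IsZeroVertex w) →
    ∀ w₁ w₂, P.lab v w₁ ≠ 0 → P.lab v w₂ ≠ 0 → w₁ ≠ w₂ →
      2 ≤ |Real.logb 2 (P.eval w₁) - Real.logb 2 (P.eval w₂)|) ∧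
  (P.Trivial ∨ ∀ v₁ ∈ P.M, ∀ v₂ ∈ P.M, v₁ ≠ v₂ →
      2 ≤ |Real.logb 2 (P.eval v₁) - Real.logb 2 (P.eval v₂)|)

/-- Isomorphism of constant power circuits: a bijection of vertices preserving
edges with their labels, marked vertices, and the signs of marked vertices. -/
def Isomorphic (P Q : PowerCircuit) : Prop :=
  ∃ φ : Fin P.n ≃ Fin Q.n,
    (∀ u v, Q.lab (φ u) (φ v) = P.lab u v) ∧
    (∀ v, φ v ∈ Q.M ↔ v ∈ P.M) ∧
    (∀ v ∈ P.M, Q.nu (φ v) = P.nu v)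

/-- The number of edges of a power circuit. -/
def edgeCount (P : PowerCircuit) : ℕ :=
  (Finset.univ.filter fun p : Fin P.n × Fin P.n => P.lab p.1 p.2 ≠ 0).card

end PowerCircuit

/-- `δ` is a signed binary expansion of `N` with digits supported in `E`. -/
def SRep (E : Finset ℕ) (N : ℤ) (δ : ℕ → ℤ) : Prop :=
  (∀ i, δ i = 0 ∨ δ i = 1 ∨ δ i = -1) ∧ (∀ i, δ i ≠ 0 → i ∈ E) ∧
    ∑ i ∈ E, δ i * 2 ^ i = N

/-- no superfluous pair of digits -/
def SCompact (δ : ℕ → ℤ) : Prop := ∀ i, δ i ≠ 0 → δ (i + 1) ≠ -δ i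

theorem SRep.mono {E F : Finset ℕ} {N : ℤ} {δ : ℕ → ℤ} (h : SRep E N δ) (hEF : E ⊆ F) :
    SRep F N δ := by
  obtain ⟨h1, h2, h3⟩ := h
  refine ⟨h1, fun i hi => hEF (h2 i hi), ?_⟩
  rw [← h3]
  symm
  apply Finset.sum_subset hEF
  intro i _ hi
  have : δ i = 0 := by
    by_contra h
    exact hi (h2 i h)
  simp [this]

theorem SRep.restrict {E F : Finset ℕ} {N : ℤ} {δ : ℕ → ℤ} (h : SRep E N δ)
    (hF : F ⊆ E) (hs : ∀ i, δ i ≠ 0 → i ∈ F) : SRep F N δ := by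
  obtain ⟨h1, h2, h3⟩ := h
  refine ⟨h1, hs, ?_⟩
  rw [← h3]
  apply Finset.sum_subset hF
  intro i _ hi
  have : δ i = 0 := by
    by_contra h
    exact hi (hs i h)
  simp [this]

theorem exists_compact (E : Finset ℕ) (N : ℤ) : ∀ (k : ℕ) (δ : ℕ → ℤ),
    (E.filter (fun i => δ i ≠ 0)).card = k → SRep E N δ → ∃ δ', SRep E N δ' ∧ SCompact δ' := by
  intro k
  induction k using Nat.strong_induction_on with
  | _ k ih =>
    intro δ hk h
    by_cases hc : SCompact δ
    · exact ⟨δ, h, hc⟩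
    · unfold SCompact at hc
      push Not at hc
      obtain ⟨i, hi, hi'⟩ := hc
      obtain ⟨h1, h2, h3⟩ := h
      have hiE := h2 i hi
      have hiE' : i + 1 ∈ E := h2 (i + 1) (by rw [hi']; simpa using hi)
      let δ' : ℕ → ℤ := fun j => δ j + (if j = i + 1 then δ i else 0) - (if j = i then 2 * δ i else 0)
      have d1 : δ' (i + 1) = 0 := by simp [δ', hi']
      have d2 : δ' i = - δ i := by simp [δ']; ring
      have d3 : ∀ j, j ≠ i → j ≠ i + 1 → δ' j = δ j := by
        intro j a b
        simp [δ', a, b]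
      refine ih _ ?_ δ' rfl ⟨?_, ?_, ?_⟩
      · rw [← hk]
        apply Finset.card_lt_card
        refine ⟨?_, ?_⟩
        · intro j
          simp only [Finset.mem_filter]
          rintro ⟨a, b⟩
          refine ⟨a, ?_⟩
          by_cases hj : j = i
          · subst hj; exact hi
          by_cases hj' : j = i + 1
          · subst hj'; exact absurd d1 b
          rwa [d3 j hj hj'] at b
        · intro hs
          have : i + 1 ∈ E.filter (fun i => δ i ≠ 0) := by
            simp only [Finset.mem_filter]
            exact ⟨hiE', by rw [hi']; simpa using hi⟩
          have := hs this
          simp [d1] at this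
      · intro j
        by_cases hj : j = i
        · subst hj; rw [d2]; rcases h1 j with h | h | h <;> simp [h]
        by_cases hj' : j = i + 1
        · subst hj'; left; exact d1
        rw [d3 j hj hj']; exact h1 j
      · intro j b
        by_cases hj : j = i
        · subst hj; exact hiE
        by_cases hj' : j = i + 1
        · subst hj'; exact hiE'
        rw [d3 j hj hj'] at b; exact h2 j b
      · simp only [δ', sub_mul, add_mul, Finset.sum_add_distrib, Finset.sum_sub_distrib, ite_mul,
          zero_mul, Finset.sum_ite_eq', hiE, hiE', if_true, h3]
        ring

theorem sum_digits_lt (δ : ℕ → ℤ) (h : ∀ i, δ i = 0 ∨ δ i = 1 ∨ δ i = -1) (n : ℕ) :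
    |∑ i ∈ Finset.range n, δ i * 2 ^ i| < 2 ^ n := by
  induction n with
  | zero => simp
  | succ n ih =>
    rw [Finset.sum_range_succ, pow_succ]
    rw [abs_lt] at ih ⊢
    have : (0:ℤ) < 2 ^ n := by positivity
    rcases h n with e | e | e <;> rw [e] <;> constructor <;> linarith [ih.1, ih.2]

theorem SRep.range {E : Finset ℕ} {N : ℤ} {δ : ℕ → ℤ} (h : SRep E N δ) (n : ℕ)
    (hn : ∀ i, δ i ≠ 0 → i < n) : ∑ i ∈ Finset.range n, δ i * 2 ^ i = N := by
  have h1 : SRep (E ∪ Finset.range n) N δ := h.mono Finset.subset_union_left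
  exact (h1.restrict (F := Finset.range n) Finset.subset_union_right
    (by simpa using hn)).2.2

theorem compact_bound {E : Finset ℕ} {N : ℤ} {δ : ℕ → ℤ} (h : SRep E N δ) (hc : SCompact δ)
    (y : ℕ) (hy : δ y ≠ 0) : 2 ^ y < 2 * |N| := by
  have hne : (E.filter (fun i => δ i ≠ 0)).Nonempty :=
    ⟨y, by simp only [Finset.mem_filter]; exact ⟨h.2.1 y hy, hy⟩⟩
  set t := (E.filter (fun i => δ i ≠ 0)).max' hne with ht
  have ht1 : t ∈ E.filter (fun i => δ i ≠ 0) := Finset.max'_mem _ _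
  have ht2 : ∀ i, δ i ≠ 0 → i < t + 1 := by
    intro i hi
    have : i ≤ t := Finset.le_max' _ _ (by simp only [Finset.mem_filter]; exact ⟨h.2.1 i hi, hi⟩)
    omega
  have hyt : y ≤ t := Nat.lt_succ_iff.mp (ht2 y hy)
  have hs := h.range _ ht2
  have hδt : δ t ≠ 0 := by simpa using (Finset.mem_filter.mp ht1).2
  have key : (2:ℤ) ^ t < 2 * |N| := by
    rw [← hs]
    clear_value t
    cases t with
    | zero =>
      simp only [zero_add, Finset.sum_range_one, pow_zero, mul_one]
      rcases h.1 0 with e | e | e <;> simp_all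
    | succ s =>
      rw [Finset.sum_range_succ, Finset.sum_range_succ, pow_succ]
      have b := abs_lt.mp (sum_digits_lt δ h.1 s)
      have p : (0:ℤ) < 2 ^ s := by positivity
      generalize ∑ i ∈ Finset.range s, δ i * 2 ^ i = A at *
      have hcs := hc s
      rcases h.1 (s + 1) with e | e | e
      · exact absurd e hδt
      · rcases h.1 s with f | f | f
        · rw [e, f]
          have := le_abs_self (A + 0 * 2 ^ s + 1 * (2 ^ s * 2)); linarith
        · rw [e, f]
          have := le_abs_self (A + 1 * 2 ^ s + 1 * (2 ^ s * 2)); linarith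
        · rw [e, f] at hcs; simp at hcs
      · rcases h.1 s with f | f | f
        · rw [e, f]
          have := neg_le_abs (A + 0 * 2 ^ s + -1 * (2 ^ s * 2)); linarith
        · rw [e, f] at hcs; simp at hcs
        · rw [e, f]
          have := neg_le_abs (A + -1 * 2 ^ s + -1 * (2 ^ s * 2)); linarith
  exact lt_of_le_of_lt (pow_le_pow_right₀ (by norm_num) hyt) key

theorem compact_lt {E : Finset ℕ} {x : ℕ} {δ : ℕ → ℤ} (h : SRep E x δ) (hc : SCompact δ)
    (y : ℕ) (hy : δ y ≠ 0) : y < x := by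
  have := compact_bound h hc y hy
  rw [Nat.abs_cast] at this
  have h1 : 2 ^ y < 2 * x := by exact_mod_cast this
  have h2 : y < 2 ^ y := Nat.lt_two_pow_self
  by_contra hxy
  have : 2 ^ x ≤ 2 ^ y := Nat.pow_le_pow_right (by norm_num) (by omega)
  rcases x with _ | x
  · simp at h1
  · have : x < 2 ^ x := Nat.lt_two_pow_self
    rw [pow_succ] at *
    omega

/-- Combinatorial core of a reduced circuit. -/
structure Core (F : Finset ℕ) (δ : ℕ → ℕ → ℤ) (N : ℤ) (ρ : ℕ → ℤ) : Prop where
  rep : ∀ x ∈ F, SRep F x (δ x)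
  comp : ∀ x ∈ F, SCompact (δ x)
  repN : SRep F N ρ
  reach : ∀ x ∈ F, ∃ r, ρ r ≠ 0 ∧ Relation.ReflTransGen (fun a b => δ a b ≠ 0) r x

theorem exists_core (E : Finset ℕ) (N : ℤ) (hE : ∀ x ∈ E, ∃ δ, SRep E x δ)
    (hN : ∃ δ, SRep E N δ) : ∃ F δ ρ, Core F δ N ρ ∧ F.card ≤ E.card := by
  classical
  have h1 : ∀ x : ℕ, ∃ δ, x ∈ E → SRep E x δ ∧ SCompact δ := by
    intro x
    by_cases hx : x ∈ E
    · obtain ⟨δ, hδ⟩ := hE x hx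
      obtain ⟨δ', h⟩ := exists_compact E x _ δ rfl hδ
      exact ⟨δ', fun _ => h⟩
    · exact ⟨0, fun h => absurd h hx⟩
  choose δ hδ using h1
  obtain ⟨ρ, hρ⟩ := hN
  let F := E.filter (fun x => ∃ r, ρ r ≠ 0 ∧ Relation.ReflTransGen (fun a b => δ a b ≠ 0) r x)
  have hFE : F ⊆ E := Finset.filter_subset _ _
  refine ⟨F, δ, ρ, ⟨?_, fun x hx => (hδ x (hFE hx)).2, ?_, ?_⟩, Finset.card_le_card hFE⟩
  · intro x hx
    refine (hδ x (hFE hx)).1.restrict hFE ?_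
    intro i hi
    obtain ⟨_, r, hr, hr'⟩ := Finset.mem_filter.mp hx
    exact Finset.mem_filter.mpr ⟨(hδ x (hFE hx)).1.2.1 i hi, r, hr, hr'.tail hi⟩
  · refine hρ.restrict hFE ?_
    intro i hi
    exact Finset.mem_filter.mpr ⟨hρ.2.1 i hi, i, hi, .refl⟩
  · intro x hx
    exact (Finset.mem_filter.mp hx).2

/-- labels of the circuit on `Option F` -/
def coreEdge (F : Finset ℕ) (δ : ℕ → ℕ → ℤ) : Option F → Option F → ℤ
  | none, _ => 0
  | some x, none => if (x : ℕ) = 0 then 1 else 0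
  | some x, some y => δ x y

/-- evaluation of the circuit on `Option F` -/
noncomputable def coreEval (F : Finset ℕ) : Option F → ℝ
  | none => 0
  | some x => 2 ^ (x : ℕ)

/-- signs of the circuit on `Option F` -/
def coreNu (F : Finset ℕ) (ρ : ℕ → ℤ) : Option F → ℤ
  | none => 0
  | some x => ρ x

/-- rank on `Option F` -/
def coreRank (F : Finset ℕ) : Option F → ℕ
  | none => 0
  | some x => x + 1

theorem coreEval_inj (F : Finset ℕ) : Function.Injective (coreEval F) := by
  intro a b h
  rcases a with _ | a <;> rcases b with _ | b
  · rfl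
  · simp only [coreEval] at h
    exact absurd h (by positivity)
  · simp only [coreEval] at h
    exact absurd h (by positivity)
  · simp only [coreEval] at h
    congr 1
    apply Subtype.ext
    exact pow_right_injective₀ (by norm_num : (0:ℝ) < 2) (by norm_num) h

theorem core_zero {F : Finset ℕ} {δ : ℕ → ℕ → ℤ} {N : ℤ} {ρ : ℕ → ℤ} (h : Core F δ N ρ)
    (hx : 0 ∈ F) (y : ℕ) : δ 0 y = 0 := by
  by_contra hy
  exact absurd (compact_lt (h.rep 0 hx) (h.comp 0 hx) y hy) (by omega)

theorem core_child {F : Finset ℕ} {N : ℤ} {ρ : ℕ → ℤ} (h : SRep F N ρ) (hN : N ≠ 0) :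
    ∃ y, ρ y ≠ 0 := by
  by_contra hc
  push Not at hc
  apply hN
  rw [← h.2.2]
  simp [hc]

theorem coreEdge_zero {F : Finset ℕ} {δ : ℕ → ℕ → ℤ} {N : ℤ} {ρ : ℕ → ℤ} (h : Core F δ N ρ)
    (v : Option F) : (∀ w, coreEdge F δ v w = 0) ↔ v = none := by
  constructor
  · intro hv
    rcases v with _ | x
    · rfl
    · exfalso
      by_cases hx : (x : ℕ) = 0
      · have := hv none
        simp [coreEdge, hx] at this
      · obtain ⟨y, hy⟩ := core_child (h.rep x x.2) (by exact_mod_cast hx)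
        exact hy (hv (some ⟨y, (h.rep x x.2).2.1 y hy⟩))
  · rintro rfl w
    rfl

theorem exists_circuit {F : Finset ℕ} {δ : ℕ → ℕ → ℤ} {N : ℤ} {ρ : ℕ → ℤ} (h : Core F δ N ρ)
    (hN : N ≠ 0) : ∃ P' : PowerCircuit, P'.Reduced ∧ P'.Proper ∧ P'.value = N ∧
      P'.n = F.card + 1 := by
  classical
  have hcard : Fintype.card (Option F) = F.card + 1 := by simp
  let e : Fin (F.card + 1) ≃ Option F := (Fintype.equivFinOfCardEq hcard).symm
  obtain ⟨r0, hr0⟩ := core_child h.repN hN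
  have hr0F := h.repN.2.1 r0 hr0
  have hrank : ∀ a b, coreEdge F δ a b ≠ 0 → coreRank F b < coreRank F a := by
    intro a b hab
    rcases a with _ | a
    · exact absurd rfl hab
    · rcases b with _ | b
      · simp [coreRank]
      · have := compact_lt (h.rep a a.2) (h.comp a a.2) b hab
        simpa [coreRank] using this
  let P' : PowerCircuit :=
    { n := F.card + 1
      npos := Nat.succ_pos _
      lab := fun u v => coreEdge F δ (e u) (e v)
      labValid := by
        intro u v
        generalize e u = a
        generalize e v = b
        rcases a with _ | a
        · left; rfl
        · rcases b with _ | b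
          · by_cases hx : (a : ℕ) = 0 <;> simp [coreEdge, hx]
          · exact (h.rep a a.2).1 b
      acyclic := by
        refine Subrelation.wf (r := InvImage (· < ·) (fun u => coreRank F (e u))) ?_
          (InvImage.wf _ wellFounded_lt)
        intro u v huv
        exact hrank _ _ huv
      M := Finset.univ.filter (fun u => coreNu F ρ (e u) ≠ 0)
      Mne := ⟨e.symm (some ⟨r0, hr0F⟩), Finset.mem_filter.mpr ⟨Finset.mem_univ _, by
        simpa [coreNu] using hr0⟩⟩
      nu := fun u => coreNu F ρ (e u)
      nuValid := by
        intro v hv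
        have hv := (Finset.mem_filter.mp hv).2
        generalize e v = a at *
        rcases a with _ | a
        · exact absurd rfl hv
        · rcases h.repN.1 a with k | k
          · exact absurd k hv
          · exact k
      eval := fun u => coreEval F (e u)
      evalSpec := by
        intro v
        have hz : (∀ w, coreEdge F δ (e v) (e w) = 0) ↔ e v = none := by
          rw [← coreEdge_zero h]
          exact ⟨fun k w => by simpa using k (e.symm w), fun k w => k _⟩
        rw [e.sum_comp (fun w => (coreEdge F δ (e v) w : ℝ) * coreEval F w)]
        simp only [hz]
        generalize e v = a
        rcases a with _ | x
        · simp [coreEval]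
        · have hs := (h.rep x x.2).2.2
          have : ∑ w, (coreEdge F δ (some x) w : ℝ) * coreEval F w = ((x : ℕ) : ℝ) := by
            rw [Fintype.sum_option]
            simp only [coreEdge, coreEval, mul_zero, zero_add]
            rw [Finset.sum_coe_sort F (fun y => (δ x y : ℝ) * 2 ^ y)]
            exact_mod_cast hs
          rw [this, if_neg (by simp), Real.rpow_natCast]
          rfl }
  have hz : ∀ v : Fin P'.n, P'.IsZeroVertex v ↔ e v = none := by
    intro v
    rw [← coreEdge_zero h]
    exact ⟨fun k w => by simpa using (show coreEdge F δ (e v) (e (e.symm w)) = 0 from k (e.symm w)),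
      fun k w => k _⟩
  have hinj : ∀ v₁ v₂ : Fin P'.n, P'.eval v₁ = P'.eval v₂ → v₁ = v₂ :=
    fun a b hab => e.injective (coreEval_inj F hab)
  have hreach1 : ∀ x (hx : x ∈ F), ∃ m ∈ P'.M,
      Relation.ReflTransGen (fun a b => P'.lab a b ≠ 0) m (e.symm (some ⟨x, hx⟩)) := by
    intro x hx
    obtain ⟨r, hr, hrx⟩ := h.reach x hx
    have hrF := h.repN.2.1 r hr
    refine ⟨e.symm (some ⟨r, hrF⟩), ?_, ?_⟩
    · refine Finset.mem_filter.mpr ⟨Finset.mem_univ _, ?_⟩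
      simpa [coreNu] using hr
    · have : ∀ z, Relation.ReflTransGen (fun a b => δ a b ≠ 0) r z → ∃ hz : z ∈ F,
          Relation.ReflTransGen (fun a b => P'.lab a b ≠ 0) (e.symm (some ⟨r, hrF⟩))
            (e.symm (some ⟨z, hz⟩)) := by
        intro z hz
        induction hz with
        | refl => exact ⟨hrF, .refl⟩
        | tail _ hbc ih =>
          obtain ⟨hb, ih⟩ := ih
          refine ⟨(h.rep _ hb).2.1 _ hbc, ih.tail ?_⟩
          change coreEdge F δ (e (e.symm _)) (e (e.symm _)) ≠ 0
          simpa [coreEdge] using hbc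
      exact (this x hrx).2
  have h0F : 0 ∈ F := by
    have hFn : F.Nonempty := ⟨r0, hr0F⟩
    have hm := F.min'_mem hFn
    by_cases hm0 : F.min' hFn = 0
    · rwa [hm0] at hm
    · obtain ⟨y, hy⟩ := core_child (h.rep _ hm) (by exact_mod_cast hm0)
      have h1 := compact_lt (h.rep _ hm) (h.comp _ hm) y hy
      have h2 := F.min'_le y ((h.rep _ hm).2.1 y hy)
      omega
  refine ⟨P', ⟨⟨?_, ?_, ?_, ?_⟩, hinj, ?_, ?_⟩, ?_, ?_, rfl⟩
  · intro v
    obtain ⟨w, rfl⟩ := e.symm.surjective v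
    rcases w with _ | x
    · obtain ⟨m, hm, hmr⟩ := hreach1 0 h0F
      refine ⟨m, hm, hmr.tail ?_⟩
      change coreEdge F δ (e (e.symm _)) (e (e.symm _)) ≠ 0
      simp [coreEdge]
    · exact hreach1 x x.2
  · refine ⟨e.symm none, (hz _).mpr (by simp), ?_⟩
    intro y hy
    rw [← (hz y).mp hy]
    simp
  · right
    intro z hz' hM
    have hM := (Finset.mem_filter.mp hM).2
    rw [(hz z).mp hz'] at hM
    exact hM rfl
  · intro v z hz' hvz w hvw
    change coreEdge F δ (e v) (e z) ≠ 0 at hvz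
    change coreEdge F δ (e v) (e w) ≠ 0 at hvw
    have k := (hz z).mp hz'
    apply e.injective
    rw [k] at hvz ⊢
    generalize e v = a at *
    generalize e w = b at *
    rcases a with _ | a
    · exact absurd rfl hvz
    · rcases b with _ | b
      · rfl
      · have ha : (a : ℕ) = 0 := by
          by_contra ha
          simp [coreEdge, ha] at hvz
        exfalso
        apply hvw
        simp only [coreEdge, ha]
        exact core_zero h h0F b
  · intro v v₁ v₂ hne _ _ _ he
    exact hne (hinj _ _ he)
  · intro v v₁ v₂ hne h1 h2 h3 he
    have hne' : e v₁ ≠ e v₂ := fun k => hne (e.injective k)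
    change coreEdge F δ (e v) (e v₁) ≠ 0 at h1
    change coreEdge F δ (e v) (e v₂) ≠ 0 at h2
    change coreEdge F δ (e v) (e v₁) = - coreEdge F δ (e v) (e v₂) at h3
    change coreEval F (e v₁) = 2 * coreEval F (e v₂) at he
    generalize e v = a at *
    generalize e v₁ = b at *
    generalize e v₂ = c at *
    rcases b with _ | b <;> rcases c with _ | c
    · exact hne' rfl
    · simp only [coreEval] at he
      exact absurd he.symm (by positivity)
    · simp only [coreEval, mul_zero] at he
      exact absurd he (by positivity)
    · rcases a with _ | a
      · exact h1 rfl
      · simp only [coreEval] at he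
        have : (b : ℕ) = c + 1 := by
          apply pow_right_injective₀ (by norm_num : (0:ℝ) < 2) (by norm_num)
          simp only [he]; ring
        simp only [coreEdge] at h1 h2 h3
        rw [this] at h3
        exact h.comp a a.2 c h2 h3
  · intro v
    change ∃ m : ℕ, coreEval F (e v) = m
    generalize e v = a
    rcases a with _ | x
    · exact ⟨0, by simp [coreEval]⟩
    · exact ⟨2 ^ (x : ℕ), by simp [coreEval]⟩
  · change ∑ v ∈ Finset.univ.filter (fun u => coreNu F ρ (e u) ≠ 0),
      (coreNu F ρ (e v) : ℝ) * coreEval F (e v) = N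
    rw [Finset.sum_filter_of_ne]
    · rw [e.sum_comp (fun w => (coreNu F ρ w : ℝ) * coreEval F w), Fintype.sum_option]
      simp only [coreNu, coreEval, mul_zero, zero_add]
      rw [Finset.sum_coe_sort F (fun y => (ρ y : ℝ) * 2 ^ y)]
      exact_mod_cast h.repN.2.2
    · intro x _ hx hx'
      exact hx (by simp [hx'])

theorem exists_trivial_circuit : ∃ P' : PowerCircuit, P'.Reduced ∧ P'.Proper ∧ P'.value = 0 ∧
      P'.n = 1 := by
  let P' : PowerCircuit :=
    { n := 1
      npos := Nat.one_pos
      lab := fun _ _ => 0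
      labValid := fun _ _ => Or.inl rfl
      acyclic := ⟨fun a => ⟨a, fun _ hb => absurd rfl hb⟩⟩
      M := {0}
      Mne := ⟨0, by simp⟩
      nu := fun _ => 1
      nuValid := fun _ _ => Or.inl rfl
      eval := fun _ => 0
      evalSpec := by intro v; simp }
  have hsub : ∀ a b : Fin P'.n, a = b := fun a b => Subsingleton.elim (α := Fin 1) a b
  refine ⟨P', ⟨⟨?_, ?_, Or.inl rfl, fun _ _ _ h => absurd rfl h⟩, fun a b _ => hsub a b,
    fun _ a b h => absurd (hsub a b) h, fun _ a b h => absurd (hsub a b) h⟩, ?_, ?_, rfl⟩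
  · intro v
    refine ⟨(0 : Fin 1), by simp [P'], ?_⟩
    rw [hsub v (0 : Fin 1)]
  · exact ⟨(0 : Fin 1), fun _ => rfl, fun y _ => hsub _ _⟩
  · intro v
    exact ⟨0, by simp [P']⟩
  · simp [PowerCircuit.value, P']

theorem exists_signed (J : ℕ) : ∀ r : ℤ, |r| < 2 ^ J → ∃ δ, SRep (Finset.range J) r δ := by
  induction J with
  | zero =>
    intro r hr
    have : r = 0 := by simpa using hr
    subst this
    exact ⟨fun _ => 0, fun _ => Or.inl rfl, fun _ h => absurd rfl h, by simp⟩
  | succ J ih =>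
    intro r hr
    have p : (0:ℤ) < 2 ^ J := by positivity
    have key : ∃ d : ℤ, (d = 0 ∨ d = 1 ∨ d = -1) ∧ |r - d * 2 ^ J| < 2 ^ J := by
      rw [pow_succ, abs_lt] at hr
      by_cases h1 : 2 ^ J ≤ r
      · exact ⟨1, by simp, by rw [abs_lt]; constructor <;> linarith [hr.1, hr.2]⟩
      by_cases h2 : r ≤ - 2 ^ J
      · exact ⟨-1, by simp, by rw [abs_lt]; constructor <;> linarith [hr.1, hr.2]⟩
      · exact ⟨0, by simp, by rw [abs_lt]; constructor <;> linarith [hr.1, hr.2]⟩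
    obtain ⟨d, hd, hr'⟩ := key
    obtain ⟨δ, h1, h2, h3⟩ := ih _ hr'
    refine ⟨fun i => if i = J then d else δ i, ?_, ?_, ?_⟩
    · intro i
      by_cases hi : i = J
      · simpa [hi] using hd
      · simpa [hi] using h1 i
    · intro i hi
      by_cases hij : i = J
      · simp [hij]
      · simp only [hij, if_false] at hi
        have := Finset.mem_range.mp (h2 i hi)
        exact Finset.mem_range.mpr (by omega)
    · rw [Finset.sum_range_succ]
      have : ∑ i ∈ Finset.range J, (if i = J then d else δ i) * 2 ^ i
          = ∑ i ∈ Finset.range J, δ i * 2 ^ i := by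
        apply Finset.sum_congr rfl
        intro i hi
        have := Finset.mem_range.mp hi
        rw [if_neg (by omega)]
      rw [this, h3]
      simp

theorem SRep.shift {E : Finset ℕ} {N : ℤ} {δ : ℕ → ℤ} (h : SRep E N δ) (J t : ℕ)
    (ht : t ≤ (Finset.range J \ E).card) : ∃ δ', SRep (E ∪ Finset.range J) (N + t) δ' := by
  obtain ⟨h1, h2, h3⟩ := h
  have hdis : Disjoint (Finset.range J) (E \ Finset.range J) := Finset.disjoint_sdiff
  have hun : E ∪ Finset.range J = Finset.range J ∪ (E \ Finset.range J) := by
    rw [Finset.union_sdiff_self_eq_union, Finset.union_comm]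
  set r := ∑ i ∈ E ∩ Finset.range J, δ i * 2 ^ i with hr
  set s := ∑ i ∈ E \ Finset.range J, δ i * 2 ^ i with hs
  have hN : r + s = N := by rw [← h3, hr, hs, Finset.sum_inter_add_sum_sdiff]
  have hrabs : |r| ≤ ∑ i ∈ E ∩ Finset.range J, (2:ℤ) ^ i := by
    refine (Finset.abs_sum_le_sum_abs _ _).trans (Finset.sum_le_sum ?_)
    intro i _
    rcases h1 i with e | e | e <;> simp [e]
  have hq : (t : ℤ) ≤ ∑ i ∈ Finset.range J \ E, (2:ℤ) ^ i := by
    calc (t : ℤ) ≤ ((Finset.range J \ E).card : ℤ) := by exact_mod_cast ht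
      _ = ∑ i ∈ Finset.range J \ E, (1:ℤ) := by simp
      _ ≤ _ := Finset.sum_le_sum fun i _ => one_le_pow₀ (by norm_num)
  have htot : (∑ i ∈ Finset.range J, (2:ℤ) ^ i) < 2 ^ J := by
    have := sum_digits_lt (fun _ => 1) (by simp) J
    simp only [one_mul] at this
    exact (le_abs_self _).trans_lt this
  have hsplit : (∑ i ∈ E ∩ Finset.range J, (2:ℤ) ^ i) + ∑ i ∈ Finset.range J \ E, (2:ℤ) ^ i
      = ∑ i ∈ Finset.range J, (2:ℤ) ^ i := by
    rw [Finset.inter_comm, Finset.sum_inter_add_sum_sdiff]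
  have hrt : |r + t| < 2 ^ J := by
    have : |r + t| ≤ |r| + |(t:ℤ)| := abs_add_le _ _
    rw [Nat.abs_cast] at this
    linarith
  obtain ⟨η, g1, g2, g3⟩ := exists_signed J _ hrt
  refine ⟨fun i => if i < J then η i else δ i, ?_, ?_, ?_⟩
  · intro i
    by_cases hi : i < J
    · simpa [hi] using g1 i
    · simpa [hi] using h1 i
  · intro i hi
    by_cases hij : i < J
    · simp [hij]
    · simp only [hij, if_false] at hi
      exact Finset.mem_union_left _ (h2 i hi)
  · rw [hun, Finset.sum_union hdis]
    have e1 : ∑ i ∈ Finset.range J, (if i < J then η i else δ i) * 2 ^ i = r + t := by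
      rw [← g3]
      apply Finset.sum_congr rfl
      intro i hi
      rw [if_pos (Finset.mem_range.mp hi)]
    have e2 : ∑ i ∈ E \ Finset.range J, (if i < J then η i else δ i) * 2 ^ i = s := by
      rw [hs]
      apply Finset.sum_congr rfl
      intro i hi
      have : ¬ i < J := by simpa using (Finset.mem_sdiff.mp hi).2
      rw [if_neg this]
    rw [e1, e2]
    linarith

/-- binary carries of the digit sequence `c` -/
def carry (c : ℕ → ℕ) : ℕ → ℕ
  | 0 => 0
  | i + 1 => (c i + carry c i) / 2

theorem carry_bound (c : ℕ → ℕ) (L : ℕ) (hL : ∀ i, L ≤ i → c i = 0) (k : ℕ) :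
    carry c (L + k) ≤ carry c L - k := by
  induction k with
  | zero => simp
  | succ k ih =>
    rw [← add_assoc]
    simp only [carry]
    rw [hL (L + k) (by omega)]
    omega

theorem carry_rep (c : ℕ → ℕ) (κ : ℕ → ℤ) (hκ : ∀ i, |κ i| ≤ c i) (n : ℕ) :
    ∃ (δ : ℕ → ℤ) (β : ℤ), (∀ i, δ i = 0 ∨ δ i = 1 ∨ δ i = -1) ∧
      (∀ i, δ i ≠ 0 → i < n ∧ 1 ≤ c i + carry c i) ∧ |β| ≤ carry c n ∧
      ∑ i ∈ Finset.range n, κ i * 2 ^ i = (∑ i ∈ Finset.range n, δ i * 2 ^ i) + β * 2 ^ n := by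
  induction n with
  | zero => exact ⟨fun _ => 0, 0, fun _ => Or.inl rfl, fun _ h => absurd rfl h, by simp, by simp⟩
  | succ n ih =>
    obtain ⟨δ, β, h1, h2, h3, h4⟩ := ih
    have key : ∃ d β' : ℤ, (d = 0 ∨ d = 1 ∨ d = -1) ∧ κ n + β = d + 2 * β' ∧
        |β'| ≤ carry c (n + 1) ∧ (d ≠ 0 → 1 ≤ c n + carry c n) := by
      have a := hκ n
      simp only [carry]
      rw [abs_le] at a h3
      by_cases hz : 0 ≤ κ n + β
      · refine ⟨(κ n + β) % 2, (κ n + β) / 2, by omega, by omega, ?_, by omega⟩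
        rw [abs_le]; push_cast; constructor <;> omega
      · refine ⟨-((-(κ n + β)) % 2), -((-(κ n + β)) / 2), by omega, by omega, ?_, by omega⟩
        rw [abs_le]; push_cast; constructor <;> omega
    obtain ⟨d, β', k1, k2, k3, k4⟩ := key
    refine ⟨fun i => if i = n then d else δ i, β', ?_, ?_, k3, ?_⟩
    · intro i
      by_cases hi : i = n
      · simpa [hi] using k1
      · simpa [hi] using h1 i
    · intro i hi
      by_cases hij : i = n
      · subst hij
        simp only [if_true] at hi
        exact ⟨by omega, k4 hi⟩
      · simp only [hij, if_false] at hi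
        have := h2 i hi
        exact ⟨by omega, this.2⟩
    · rw [Finset.sum_range_succ, Finset.sum_range_succ]
      have : ∑ i ∈ Finset.range n, (if i = n then d else δ i) * 2 ^ i
          = ∑ i ∈ Finset.range n, δ i * 2 ^ i := by
        apply Finset.sum_congr rfl
        intro i hi
        have := Finset.mem_range.mp hi
        rw [if_neg (by omega)]
      rw [this, h4, pow_succ]
      simp only [if_true]
      linear_combination k2 * 2 ^ n

theorem carry_count (c : ℕ → ℕ) (i : ℕ) :
    Nat.count (fun i => 1 ≤ c i + carry c i) i + carry c i ≤ ∑ k ∈ Finset.range i, c k := by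
  induction i with
  | zero => simp [carry]
  | succ i ih =>
    rw [Nat.count_succ, Finset.sum_range_succ]
    simp only [carry]
    split_ifs <;> omega

theorem carry_count' (c : ℕ → ℕ) (x T : ℕ) (hT : 2 ^ T ≤ c x + carry c x) (i : ℕ) (hi : x + 1 ≤ i) :
    Nat.count (fun i => 1 ≤ c i + carry c i) i + carry c i + (T - 1)
      ≤ ∑ k ∈ Finset.range i, c k := by
  induction i, hi using Nat.le_induction with
  | base =>
    rw [Nat.count_succ, Finset.sum_range_succ]
    have := carry_count c x
    simp only [carry]
    have h2 : 1 ≤ T → 2 * T ≤ 2 ^ T := by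
      intro h
      obtain ⟨s, rfl⟩ : ∃ s, T = s + 1 := ⟨T - 1, by omega⟩
      have : s < 2 ^ s := Nat.lt_two_pow_self
      rw [pow_succ]; omega
    split_ifs <;> omega
  | succ i hi ih =>
    rw [Nat.count_succ, Finset.sum_range_succ]
    simp only [carry]
    split_ifs <;> omega

theorem carry_origin (c : ℕ → ℕ) (y : ℕ) : ∀ k, 2 ^ k ≤ c y + carry c y →
    ∃ x T, x + T = y ∧ 1 ≤ c x ∧ 2 ^ (k + T) ≤ c x + carry c x := by
  induction y with
  | zero =>
    intro k hk
    have : 1 ≤ 2 ^ k := Nat.one_le_two_pow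
    simp only [carry] at hk
    exact ⟨0, 0, rfl, by omega, by simpa [carry] using hk⟩
  | succ y ih =>
    intro k hk
    by_cases hc : 1 ≤ c (y + 1)
    · exact ⟨y + 1, 0, rfl, hc, by simpa using hk⟩
    · have h1 : 2 ^ (k + 1) ≤ c y + carry c y := by
        simp only [carry] at hk
        rw [pow_succ]; omega
      obtain ⟨x, T, e, h2, h3⟩ := ih _ h1
      exact ⟨x, T + 1, by omega, h2, by rwa [show k + (T + 1) = k + 1 + T by ring]⟩

theorem comb {ι : Type} [Fintype ι] (x : ι → ℕ)
    (hx : ∀ k, ∃ ε : ι → ℤ, (∀ j, ε j = 0 ∨ ε j = 1 ∨ ε j = -1) ∧ ∑ j, ε j * 2 ^ x j = (x k : ℤ)) :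
    ∃ E : Finset ℕ, E.card ≤ Fintype.card ι + 1 ∧ (∀ y ∈ E, ∃ δ, SRep E y δ) ∧
      ∀ ε : ι → ℤ, (∀ j, ε j = 0 ∨ ε j = 1 ∨ ε j = -1) → ∃ δ, SRep E (∑ j, ε j * 2 ^ x j) δ := by
  classical
  let c : ℕ → ℕ := fun i => (Finset.univ.filter (fun k => x k = i)).card
  obtain ⟨L, hL⟩ : ∃ L, ∀ k, x k < L :=
    ⟨Finset.univ.sup x + 1, fun k => Nat.lt_succ_of_le (Finset.le_sup (Finset.mem_univ k))⟩
  have hc0 : ∀ i, L ≤ i → c i = 0 := by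
    intro i hi
    simp only [c, Finset.card_eq_zero, Finset.filter_eq_empty_iff]
    intro k _ hk
    have := hL k
    omega
  set n := L + carry c L with hn
  have hcn : carry c n = 0 := by
    have := carry_bound c L hc0 (carry c L)
    rw [← hn, Nat.sub_self] at this
    omega
  have hsumc : ∑ i ∈ Finset.range n, c i = Fintype.card ι := by
    rw [← Finset.card_univ]
    symm
    apply Finset.card_eq_sum_card_fiberwise
    intro k _
    have := hL k
    simp only [Finset.coe_range, Set.mem_Iio]
    omega
  let E := (Finset.range n).filter (fun i => 1 ≤ c i + carry c i)
  have hEc : E.card = Nat.count (fun i => 1 ≤ c i + carry c i) n := by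
    rw [Nat.count_eq_card_filter_range]
  have hEm : E.card ≤ Fintype.card ι := by
    have := carry_count c n
    omega
  have hrep : ∀ ε : ι → ℤ, (∀ j, ε j = 0 ∨ ε j = 1 ∨ ε j = -1) →
      ∃ δ, SRep E (∑ j, ε j * 2 ^ x j) δ := by
    intro ε hε
    obtain ⟨δ, β, h1, h2, h3, h4⟩ := carry_rep c
      (fun i => ∑ k ∈ Finset.univ.filter (fun k => x k = i), ε k) (by
        intro i
        refine (Finset.abs_sum_le_sum_abs _ _).trans ?_
        have : ∀ k ∈ Finset.univ.filter (fun k => x k = i), |ε k| ≤ 1 := by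
          intro k _
          rcases hε k with e | e | e <;> simp [e]
        simpa [c] using Finset.sum_le_card_nsmul _ _ _ this) n
    have hβ : β = 0 := by
      rw [hcn] at h3
      simpa using h3
    have hsup : ∀ i, δ i ≠ 0 → i ∈ E := by
      intro i hi
      exact Finset.mem_filter.mpr ⟨Finset.mem_range.mpr (h2 i hi).1, (h2 i hi).2⟩
    refine ⟨δ, SRep.restrict (E := Finset.range n) ⟨h1, ?_, ?_⟩ (Finset.filter_subset _ _) hsup⟩
    · intro i hi
      exact Finset.mem_range.mpr (h2 i hi).1
    · rw [hβ, zero_mul, add_zero] at h4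
      rw [← h4, ← Finset.sum_fiberwise_of_maps_to (s := Finset.univ) (t := Finset.range n) (g := x)]
      · apply Finset.sum_congr rfl
        intro i _
        rw [Finset.sum_mul]
        apply Finset.sum_congr rfl
        intro k hk
        rw [(Finset.mem_filter.mp hk).2]
      · intro k _
        have := hL k
        exact Finset.mem_range.mpr (by omega)
  set q := Fintype.card ι + 1 - E.card with hq
  have hinf : (Set.ofPred (fun i => i ∉ E)).Infinite := by
    have := E.finite_toSet.infinite_compl
    exact this
  set J := Nat.nth (fun i => i ∉ E) q with hJ
  have hJq : (Finset.range J \ E).card = q := by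
    have := Nat.count_nth_of_infinite hinf q
    rw [Nat.count_eq_card_filter_range] at this
    rwa [Finset.sdiff_eq_filter]
  refine ⟨E ∪ Finset.range J, ?_, ?_, ?_⟩
  · rw [← Finset.union_sdiff_self_eq_union]
    have := Finset.card_union_le E (Finset.range J \ E)
    omega
  · intro y hy
    rcases Finset.mem_union.mp hy with hy | hy
    · have hy1 := (Finset.mem_filter.mp hy).2
      have hyn := Finset.mem_range.mp (Finset.mem_filter.mp hy).1
      obtain ⟨x0, T, e, hx0, hT⟩ := carry_origin c y 0 (by simpa using hy1)
      rw [zero_add] at hT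
      have h1 := carry_count' c x0 T hT n (by omega)
      have hTq : T ≤ q := by omega
      obtain ⟨k, hk⟩ : ∃ k, x k = x0 := by
        obtain ⟨k, hk⟩ := Finset.card_pos.mp hx0
        exact ⟨k, (Finset.mem_filter.mp hk).2⟩
      obtain ⟨ε, hε, hs⟩ := hx k
      obtain ⟨δ, hδ⟩ := hrep ε hε
      rw [hs, hk] at hδ
      obtain ⟨δ', h'⟩ := hδ.shift J T (by omega)
      refine ⟨δ', ?_⟩
      rw [← e]
      exact_mod_cast h'
    · have h1 := Finset.mem_range.mp hy
      have h2 : J < 2 ^ J := Nat.lt_two_pow_self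
      obtain ⟨δ, hδ⟩ := exists_signed J y (by
        rw [Nat.abs_cast]
        exact_mod_cast h1.trans h2)
      exact ⟨δ, hδ.mono Finset.subset_union_right⟩
  · intro ε hε
    obtain ⟨δ, hδ⟩ := hrep ε hε
    exact ⟨δ, hδ.mono Finset.subset_union_left⟩

/-- For every proper constant power circuit `P` there is an equivalent proper
reduced constant power circuit `P'` with at most one more vertex. -/
theorem exists_equivalent_reduced_circuit (P : PowerCircuit) (hP : P.Proper) :
    ∃ P' : PowerCircuit, P'.Reduced ∧ P'.Proper ∧ P'.value = P.value ∧
      P'.n ≤ P.n + 1 := by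
  classical
  choose a ha using hP
  -- the nonzero vertices
  let ι := {v : Fin P.n // ¬ ∀ w, P.lab v w = 0}
  have hzero : ∀ v, (∀ w, P.lab v w = 0) → P.eval v = 0 := by
    intro v hv
    rw [P.evalSpec v, if_pos hv]
  have hexp : ∀ v : ι, ∃ m : ℕ, (∑ w, P.lab v w * (a w : ℤ)) = m ∧ a v = 2 ^ m := by
    intro v
    have h := P.evalSpec v
    rw [if_neg v.2] at h
    have hs : ∑ w, (P.lab v w : ℝ) * P.eval w = ((∑ w, P.lab v w * (a w : ℤ) : ℤ) : ℝ) := by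
      push_cast
      simp only [ha]
    rw [hs, ha, Real.rpow_intCast] at h
    set z := ∑ w, P.lab v w * (a w : ℤ) with hz
    have hz0 : 0 ≤ z := by
      by_contra hneg
      have h1 : (2:ℝ) ^ z < 1 := zpow_lt_one_of_neg₀ (by norm_num) (by omega)
      have h2 : (0:ℝ) < 2 ^ z := by positivity
      rw [← h] at h1 h2
      have h3 : a v < 1 := by exact_mod_cast h1
      have h4 : 0 < a v := by exact_mod_cast h2
      omega
    obtain ⟨m, hm⟩ := Int.eq_ofNat_of_zero_le hz0
    refine ⟨m, hm, ?_⟩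
    rw [hm, zpow_natCast] at h
    exact_mod_cast h
  choose x hx1 hx2 using hexp
  have ha0 : ∀ v, (∀ w, P.lab v w = 0) → a v = 0 := by
    intro v hv
    have := hzero v hv
    rw [ha] at this
    exact_mod_cast this
  have hsum : ∀ g : Fin P.n → ℤ, ∑ w, g w * (a w : ℤ) = ∑ w : ι, g w * 2 ^ x w := by
    intro g
    have h1 : ∀ w : ι, g w * 2 ^ x w = g w * (a w : ℤ) := by
      intro w
      rw [hx2]; push_cast; rfl
    simp only [h1]
    rw [← Finset.sum_subtype (Finset.univ.filter (fun v => ¬ ∀ w, P.lab v w = 0)) (by simp)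
      (fun w => g w * (a w : ℤ))]
    symm
    apply Finset.sum_filter_of_ne
    intro v _ hv hv0
    exact hv (by rw [ha0 v hv0]; simp)
  obtain ⟨E, hE1, hE2, hE3⟩ := comb x (fun k => ⟨fun j => P.lab k j, fun j => P.labValid _ _, by
    rw [← hsum (fun w => P.lab k w), hx1]⟩)
  have hcard : Fintype.card ι + 1 ≤ P.n := by
    obtain ⟨z, hz⟩ : ∃ z, ∀ w, P.lab z w = 0 := by
      obtain ⟨z, -, hz⟩ := P.acyclic.has_min Set.univ ⟨⟨0, P.npos⟩, trivial⟩
      exact ⟨z, fun w => by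
        by_contra h
        exact hz w trivial h⟩
    have : Fintype.card ι < Fintype.card (Fin P.n) :=
      Fintype.card_subtype_lt (x := z) (by simpa using hz)
    rw [Fintype.card_fin] at this
    omega
  let ν : Fin P.n → ℤ := fun v => if v ∈ P.M then P.nu v else 0
  set N := ∑ w, ν w * (a w : ℤ) with hN
  have hval : P.value = N := by
    rw [hN, PowerCircuit.value]
    push_cast
    simp only [ν, ha]
    rw [← Finset.sum_subset (Finset.subset_univ P.M)]
    · apply Finset.sum_congr rfl
      intro v hv
      rw [if_pos hv]
    · intro v _ hv
      rw [if_neg hv]; simp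
  have hNrep := hE3 (fun w => ν w) (by
    intro j
    by_cases hj : (j : Fin P.n) ∈ P.M
    · simp only [ν, hj, if_true]
      exact Or.inr (P.nuValid _ hj)
    · simp [ν, hj])
  rw [← hsum ν] at hNrep
  by_cases hN0 : N = 0
  · obtain ⟨P', h1, h2, h3, h4⟩ := exists_trivial_circuit
    refine ⟨P', h1, h2, ?_, by omega⟩
    rw [h3, hval, hN0]; simp
  · obtain ⟨F, δ, ρ, hF, hFE⟩ := exists_core E N hE2 hNrep
    obtain ⟨P', h1, h2, h3, h4⟩ := exists_circuit hF hN0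
    exact ⟨P', h1, h2, by rw [h3, hval], by omega⟩
end

section
/- For every natural number n ≥ 1 there exists a constant power circuit in normal form that properly represents n and has at most ⌈log₂ n⌉ + 2 vertices. -/
namespace NafCircuit

/-- Next number in the non-adjacent form expansion. -/
def nxt (n : ℕ) : ℕ := if n % 4 = 3 then (n + 1) / 2 else n / 2

/-- Digits of the non-adjacent form. -/
def dig : ℕ → ℕ → ℤ
  | n, 0 => if n % 2 = 0 then 0 else if n % 4 = 1 then 1 else -1
  | n, i + 1 => dig (nxt n) i

lemma dig_valid (n i : ℕ) : dig n i = 0 ∨ dig n i = 1 ∨ dig n i = -1 := by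
  induction i generalizing n with
  | zero => simp only [dig]; split_ifs <;> simp
  | succ i ih => exact ih _

lemma dig_step (n : ℕ) : (n : ℤ) = dig n 0 + 2 * (nxt n : ℤ) := by
  simp only [dig, nxt]; split_ifs <;> omega

lemma dig_adj (n i : ℕ) (h : dig n i ≠ 0) : dig n (i + 1) = 0 := by
  induction i generalizing n with
  | zero =>
    simp only [dig, nxt] at *
    split_ifs at * <;> first | rfl | omega
  | succ i ih => exact ih _ h

lemma dig_zero (i : ℕ) : dig 0 i = 0 := by
  induction i with
  | zero => rfl
  | succ i ih => exact ih

lemma dig_bound (m n i : ℕ) (h : n ≤ 2 ^ m) (hi : m < i) : dig n i = 0 := by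
  induction m generalizing n i with
  | zero =>
    obtain ⟨i, rfl⟩ : ∃ k, i = k + 1 := ⟨i - 1, by omega⟩
    have : nxt n = 0 := by
      simp at h
      simp only [nxt]; split_ifs <;> omega
    simp [dig, this, dig_zero]
  | succ m ih =>
    obtain ⟨i, rfl⟩ : ∃ k, i = k + 1 := ⟨i - 1, by omega⟩
    refine ih (nxt n) i ?_ (by omega)
    rw [pow_succ] at h
    simp only [nxt]; split_ifs <;> omega

lemma dig_sum (m n : ℕ) (h : n ≤ 2 ^ m) :
    ∑ i ∈ Finset.range (m + 1), dig n i * 2 ^ i = (n : ℤ) := by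
  induction m generalizing n with
  | zero =>
    simp at h
    interval_cases n <;> simp [dig]
  | succ m ih =>
    rw [Finset.sum_range_succ']
    have h2 : nxt n ≤ 2 ^ m := by
      rw [pow_succ] at h
      simp only [nxt]; split_ifs <;> omega
    have := ih _ h2
    have e : ∀ i, dig n (i + 1) * 2 ^ (i + 1) = 2 * (dig (nxt n) i * 2 ^ i) := by
      intro i; simp only [dig]; ring
    simp only [e]
    rw [← Finset.mul_sum, this, dig_step n]; simp; ring

/-- Edge labels of the infinite circuit: vertex `0` is the zero vertex, `i+1` is `2^i`. -/
def L : ℕ → ℕ → ℤ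
  | 0, _ => 0
  | 1, 0 => 1
  | 1, _ + 1 => 0
  | _ + 2, 0 => 0
  | i + 2, j + 1 => dig (i + 1) j

/-- Evaluation in the infinite circuit. -/
def E : ℕ → ℕ
  | 0 => 0
  | i + 1 => 2 ^ i

lemma L_valid (a b : ℕ) : L a b = 0 ∨ L a b = 1 ∨ L a b = -1 := by
  rcases a with _ | _ | a <;> rcases b with _ | b <;> simp [L, dig_valid]

lemma L_le (i m b : ℕ) (hm : i ≤ 2 ^ m) (h : L (i + 1) b ≠ 0) : b ≤ m + 1 := by
  rcases i with _ | i <;> rcases b with _ | b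
  · omega
  · simp [L] at h
  · omega
  · by_contra hc
    exact h (dig_bound m _ _ hm (by omega))

lemma L_lt (a b : ℕ) (h : L a b ≠ 0) : b < a := by
  rcases a with _ | _ | i
  · simp [L] at h
  · rcases b with _ | b
    · omega
    · simp [L] at h
  · have := L_le (i + 1) i b (Nat.lt_two_pow_self) h
    omega

lemma L_sep (a b c : ℕ) (hb : L a b ≠ 0) (hc : L a c ≠ 0) (hne : b ≠ c) :
    ∃ i j, b = i + 1 ∧ c = j + 1 ∧ (i + 2 ≤ j ∨ j + 2 ≤ i) := by
  rcases a with _ | _ | a <;> rcases b with _ | b <;> rcases c with _ | c <;>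
    simp [L] at hb hc hne
  refine ⟨b, c, rfl, rfl, ?_⟩
  by_contra hcon
  rcases lt_or_gt_of_ne hne with h | h
  · have : c = b + 1 := by omega
    subst this; exact hc (dig_adj _ _ hb)
  · have : b = c + 1 := by omega
    subst this; exact hb (dig_adj _ _ hc)

lemma L_sum_range (i : ℕ) : ∑ x ∈ Finset.range (i + 1), L (i + 1) x * (E x : ℤ) = i := by
  rcases i with _ | i
  · simp [L, E]
  · rw [Finset.sum_range_succ']
    have := dig_sum i (i + 1) Nat.lt_two_pow_self
    simpa [L, E] using this

lemma L_sum (i : ℕ) (S : Finset ℕ) (hS : ∀ x, L (i + 1) x ≠ 0 → x ∈ S) :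
    ∑ x ∈ S, L (i + 1) x * (E x : ℤ) = i := by
  rw [← L_sum_range i]
  trans ∑ x ∈ S ∪ Finset.range (i + 1), L (i + 1) x * (E x : ℤ)
  · apply Finset.sum_subset Finset.subset_union_left
    intro x _ hx
    have : L (i + 1) x = 0 := by by_contra h; exact hx (hS x h)
    simp [this]
  · symm
    apply Finset.sum_subset Finset.subset_union_right
    intro x _ hx
    have : L (i + 1) x = 0 := by
      by_contra h; exact hx (Finset.mem_range.2 (L_lt _ _ h))
    simp [this]

lemma L_child (i : ℕ) : ∃ b, L (i + 1) b ≠ 0 := by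
  rcases i with _ | i
  · exact ⟨0, by simp [L]⟩
  · by_contra! h
    have := L_sum_range (i + 1)
    simp only [h] at this
    simp at this
    omega

lemma E_inj {a b : ℕ} (h : E a = E b) : a = b := by
  rcases a with _ | a <;> rcases b with _ | b
  · rfl
  · simp [E] at h
    exact absurd h.symm (by positivity)
  · simp [E] at h
  · have := Nat.pow_right_injective (le_refl 2) h
    omega

lemma logb_E (i : ℕ) : Real.logb 2 ((E (i + 1) : ℕ) : ℝ) = i := by
  simp [E, Real.logb_pow]

lemma sep_log {b c : ℕ} (h : ∃ i j, b = i + 1 ∧ c = j + 1 ∧ (i + 2 ≤ j ∨ j + 2 ≤ i)) :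
    2 ≤ |Real.logb 2 ((E b : ℕ) : ℝ) - Real.logb 2 ((E c : ℕ) : ℝ)| := by
  obtain ⟨i, j, rfl, rfl, h⟩ := h
  rw [logb_E, logb_E, le_abs]
  rcases h with h | h
  · right
    have : ((i + 2 : ℕ) : ℝ) ≤ j := by exact_mod_cast h
    push_cast at this; linarith
  · left
    have : ((j + 2 : ℕ) : ℝ) ≤ i := by exact_mod_cast h
    push_cast at this; linarith

/-- A finite set closed under children gives a finite enumeration. -/
lemma exists_circuit (n : ℕ) (hn : 1 ≤ n) (S : Finset ℕ)
    (hS : ∀ x, x ∈ S ↔ Relation.TransGen (fun a b => L a b ≠ 0) (n + 1) x) :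
    ∃ P : PowerCircuit, P.NormalForm ∧ P.Represents (n : ℤ) ∧ P.n = S.card := by
  classical
  let f : Fin S.card ↪o ℕ := S.orderEmbOfFin rfl
  have hfS : ∀ v, f v ∈ S := fun v => Finset.orderEmbOfFin_mem S rfl v
  have hsurj : ∀ x ∈ S, ∃ v, f v = x := by
    intro x hx
    have : x ∈ Set.range f := by
      rw [Finset.range_orderEmbOfFin]; exact hx
    exact this
  have hinj : ∀ u v, f u = f v → u = v := fun u v h => f.injective h
  have hmap : Finset.univ.map f.toEmbedding = S := by
    ext x
    simp only [Finset.mem_map, Finset.mem_univ, true_and]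
    exact ⟨fun ⟨v, hv⟩ => hv ▸ hfS v, fun hx => hsurj x hx⟩
  have htop : ∀ x, L (n + 1) x ≠ 0 → x ∈ S := fun x hx =>
    (hS x).2 (Relation.TransGen.single hx)
  have hcl : ∀ a ∈ S, ∀ x, L a x ≠ 0 → x ∈ S := fun a ha x hx =>
    (hS x).2 (Relation.TransGen.tail ((hS a).1 ha) hx)
  have hsum : ∀ i, (∀ x, L (i + 1) x ≠ 0 → x ∈ S) →
      ∑ w, (L (i + 1) (f w) : ℝ) * ((E (f w) : ℕ) : ℝ) = i := by
    intro i hi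
    have h := L_sum i S hi
    rw [← hmap, Finset.sum_map] at h
    have h' := congrArg (Int.cast : ℤ → ℝ) h
    push_cast at h'
    exact h'
  have hzero : ∀ v, (∀ w, L (f v) (f w) = 0) ↔ f v = 0 := by
    intro v
    constructor
    · intro h
      by_contra hne
      obtain ⟨i, hi⟩ : ∃ i, f v = i + 1 := ⟨f v - 1, by omega⟩
      obtain ⟨b, hb⟩ := L_child i
      obtain ⟨w, rfl⟩ := hsurj b (hcl _ (hfS v) b (hi ▸ hb))
      exact hb (hi ▸ h w)
    · intro h w; rw [h]; simp [L]
  have hSne : ∃ v, L (n + 1) (f v) ≠ 0 := by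
    obtain ⟨b, hb⟩ := L_child n
    obtain ⟨w, rfl⟩ := hsurj b (htop b hb)
    exact ⟨w, hb⟩
  have h0S : 0 ∈ S := by
    have key : ∀ a, a ∈ S → 0 ∈ S := by
      intro a
      induction a using Nat.strong_induction_on with
      | _ a ih =>
        intro ha
        rcases a with _ | a
        · exact ha
        · obtain ⟨b, hb⟩ := L_child a
          exact ih b (L_lt _ _ hb) (hcl _ ha b hb)
    obtain ⟨v, hv⟩ := hSne
    exact key _ (hfS v)
  obtain ⟨z, hz⟩ := hsurj 0 h0S
  let P : PowerCircuit :=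
    { n := S.card
      npos := Finset.card_pos.2 ⟨0, h0S⟩
      lab := fun u v => L (f u) (f v)
      labValid := fun u v => L_valid _ _
      acyclic := Subrelation.wf (r := InvImage (· < ·) f)
        (fun {a b} h => L_lt _ _ h) (InvImage.wf f Nat.lt_wfRel.wf)
      M := Finset.univ.filter fun v => L (n + 1) (f v) ≠ 0
      Mne := by obtain ⟨v, hv⟩ := hSne; exact ⟨v, by simpa using hv⟩
      nu := fun v => L (n + 1) (f v)
      nuValid := fun v hv => by
        have := L_valid (n + 1) (f v)
        simp only [Finset.mem_filter] at hv
        tauto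
      eval := fun v => ((E (f v) : ℕ) : ℝ)
      evalSpec := by
        intro v
        simp only [hzero]
        split_ifs with h
        · rw [h]; simp [E]
        · obtain ⟨i, hi⟩ : ∃ i, f v = i + 1 := ⟨f v - 1, by omega⟩
          rw [hi, hsum i (hi ▸ hcl _ (hfS v))]
          simp [E] }
  have hprop : P.Proper := fun v => ⟨_, rfl⟩
  have hMmem : ∀ v, v ∈ P.M ↔ L (n + 1) (f v) ≠ 0 := fun v => by
    simp only [P, Finset.mem_filter, Finset.mem_univ, true_and]
  have hZ : ∀ v, P.IsZeroVertex v ↔ f v = 0 := hzero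
  have hsep : ∀ a (u v : Fin S.card), L a (f u) ≠ 0 → L a (f v) ≠ 0 → u ≠ v →
      ∃ i j, f u = i + 1 ∧ f v = j + 1 ∧ (i + 2 ≤ j ∨ j + 2 ≤ i) :=
    fun a u v hu hv hne => L_sep a _ _ hu hv (fun h => hne (hinj _ _ h))
  have hEinj : ∀ v₁ v₂ : Fin P.n, P.eval v₁ = P.eval v₂ → v₁ = v₂ := by
    intro u v h
    have h' : ((E (f u) : ℕ) : ℝ) = ((E (f v) : ℕ) : ℝ) := h
    exact hinj _ _ (E_inj (by exact_mod_cast h'))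
  refine ⟨P, ⟨hprop, ⟨⟨?_, ?_, ?_, ?_⟩, hEinj, ?_, ?_⟩, ?_, ?_⟩, ⟨hprop, ?_⟩, rfl⟩
  · intro v
    have key : ∀ x, Relation.TransGen (fun a b => L a b ≠ 0) (n + 1) x → ∀ v, f v = x →
        ∃ m ∈ P.M, Relation.ReflTransGen (fun a b => P.lab a b ≠ 0) m v := by
      intro x hx
      induction hx with
      | single h =>
        intro v hv
        exact ⟨v, (hMmem v).2 (hv ▸ h), Relation.ReflTransGen.refl⟩
      | tail hab hbc ih =>
        intro v hv
        obtain ⟨u, hu⟩ := hsurj _ ((hS _).2 hab)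
        obtain ⟨m, hm, hmu⟩ := ih u hu
        refine ⟨m, hm, hmu.tail ?_⟩
        show L (f u) (f v) ≠ 0
        rw [hu, hv]; exact hbc
    exact key _ ((hS _).1 (hfS v)) v rfl
  · exact ⟨z, (hZ z).2 hz, fun y hy => hinj _ _ (((hZ y).1 hy).trans hz.symm)⟩
  · right
    intro y hy hyM
    have h1 := (hZ y).1 hy
    have h2 := (hMmem y).1 hyM
    rw [h1] at h2
    obtain ⟨k, rfl⟩ : ∃ k, n = k + 1 := ⟨n - 1, by omega⟩
    exact h2 rfl
  · intro v y hy hvy w hw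
    by_contra hne
    obtain ⟨i, j, _, h2, _⟩ := hsep (f v) w y hw hvy hne
    have h3 := (hZ y).1 hy
    omega
  · intro v v₁ v₂ hne _ _ _ h
    exact hne (hEinj _ _ h)
  · intro v v₁ v₂ hne h1 h2 _ h
    obtain ⟨i, j, hi, hj, hij⟩ := hsep (f v) v₁ v₂ h1 h2 hne
    have h' : ((E (f v₁) : ℕ) : ℝ) = 2 * ((E (f v₂) : ℕ) : ℝ) := h
    rw [hi, hj] at h'
    have h3 : E (i + 1) = E (j + 1 + 1) := by
      have h4 : E (i + 1) = 2 * E (j + 1) := by exact_mod_cast h'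
      rw [h4]; simp only [E]; ring
    have := E_inj h3
    omega
  · intro v _ w₁ w₂ h1 h2 hne
    exact sep_log (hsep (f v) w₁ w₂ h1 h2 hne)
  · right
    intro v₁ h1 v₂ h2 hne
    exact sep_log (hsep (n + 1) v₁ v₂ ((hMmem _).1 h1) ((hMmem _).1 h2) hne)
  · have h := hsum n htop
    rw [Int.cast_natCast, ← h]
    show ∑ v ∈ Finset.univ.filter (fun v => L (n + 1) (f v) ≠ 0),
      (L (n + 1) (f v) : ℝ) * ((E (f v) : ℕ) : ℝ) = _
    apply Finset.sum_subset (Finset.subset_univ _)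
    intro v _ hv
    have : L (n + 1) (f v) = 0 := by simpa using hv
    simp [this]

end NafCircuit

/-- Every natural number `n ≥ 1` is properly represented by a constant power
circuit in normal form with at most `⌈log₂ n⌉ + 2` vertices. -/
theorem normal_circuit_for_nat (n : ℕ) (hn : 1 ≤ n) :
    ∃ P : PowerCircuit, P.NormalForm ∧ P.Represents (n : ℤ) ∧
      P.n ≤ Nat.clog 2 n + 2 := by
  classical
  have hle : ∀ x, Relation.TransGen (fun a b => NafCircuit.L a b ≠ 0) (n + 1) x →
      x < Nat.clog 2 n + 2 := by
    intro x hx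
    induction hx with
    | single h =>
      have := NafCircuit.L_le n (Nat.clog 2 n) _ (Nat.le_pow_clog (by norm_num) n) h
      omega
    | tail _ h ih =>
      have := NafCircuit.L_lt _ _ h
      omega
  obtain ⟨P, h1, h2, h3⟩ := NafCircuit.exists_circuit n hn
    ((Finset.range (Nat.clog 2 n + 2)).filter
      (fun x => Relation.TransGen (fun a b => NafCircuit.L a b ≠ 0) (n + 1) x))
    (fun x => by
      simp only [Finset.mem_filter, Finset.mem_range]
      exact ⟨fun h => h.2, fun h => ⟨hle x h, h⟩⟩)
  refine ⟨P, h1, h2, ?_⟩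
  rw [h3]
  refine (Finset.card_filter_le _ _).trans ?_
  simp
end

section
/- For every i ∈ ℕ, every constant power circuit that properly represents the number N_i = (4^{i+1} − 1)/3 has at least i + 1 vertices. -/
/-- `SignedRep k N`: `N` is a sum of `k` terms, each `0` or plus or minus a power of two. -/
inductive SignedRep : ℕ → ℤ → Prop
  | zero : SignedRep 0 0
  | same {k N} : SignedRep k N → SignedRep (k + 1) N
  | pos {k N} (a : ℕ) : SignedRep k N → SignedRep (k + 1) (N + 2 ^ a)
  | neg {k N} (a : ℕ) : SignedRep k N → SignedRep (k + 1) (N - 2 ^ a)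

theorem SignedRep.halve {k : ℕ} {N : ℤ} (h : SignedRep k N) :
    (∀ m, N = 2 * m → SignedRep k m) ∧
    (∀ m, N = 2 * m + 1 → ∃ j, k = j + 1 ∧ (SignedRep j m ∨ SignedRep j (m + 1))) := by
  induction h with
  | zero =>
    refine ⟨fun m hm => ?_, fun m hm => by omega⟩
    obtain rfl : m = 0 := by omega
    exact .zero
  | @same k N h ih =>
    refine ⟨fun m hm => (ih.1 m hm).same, fun m hm => ?_⟩
    obtain ⟨j, rfl, h | h⟩ := ih.2 m hm
    · exact ⟨_, rfl, .inl h.same⟩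
    · exact ⟨_, rfl, .inr h.same⟩
  | @pos k N a h ih =>
    cases a with
    | zero =>
      refine ⟨fun m hm => ?_, fun m hm => ?_⟩
      · obtain ⟨j, rfl, h | h⟩ := ih.2 (m - 1) (by simp at hm; omega)
        · have := (h.pos 0).same
          simpa using this
        · have := h.same.same
          simpa using this
      · exact ⟨_, rfl, .inl (ih.1 m (by simp at hm; omega))⟩
    | succ a =>
      rw [pow_succ]
      refine ⟨fun m hm => ?_, fun m hm => ?_⟩
      · have := (ih.1 (m - 2 ^ a) (by omega)).pos a
        simpa using this
      · obtain ⟨j, rfl, h | h⟩ := ih.2 (m - 2 ^ a) (by omega)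
        · exact ⟨_, rfl, .inl (by simpa using h.pos a)⟩
        · refine ⟨_, rfl, .inr ?_⟩
          have := h.pos a
          rwa [show m - 2 ^ a + 1 + 2 ^ a = m + 1 by ring] at this
  | @neg k N a h ih =>
    cases a with
    | zero =>
      refine ⟨fun m hm => ?_, fun m hm => ?_⟩
      · obtain ⟨j, rfl, h | h⟩ := ih.2 m (by simp at hm; omega)
        · exact h.same.same
        · have := (h.neg 0).same
          simpa using this
      · exact ⟨_, rfl, .inr (ih.1 (m + 1) (by simp at hm; omega))⟩
    | succ a =>
      rw [pow_succ]
      refine ⟨fun m hm => ?_, fun m hm => ?_⟩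
      · have := (ih.1 (m + 2 ^ a) (by omega)).neg a
        simpa using this
      · obtain ⟨j, rfl, h | h⟩ := ih.2 (m + 2 ^ a) (by omega)
        · exact ⟨_, rfl, .inl (by simpa using h.neg a)⟩
        · refine ⟨_, rfl, .inr ?_⟩
          have := h.neg a
          rwa [show m + 2 ^ a + 1 - 2 ^ a = m + 1 by ring] at this

theorem SignedRep.bound (i : ℕ) : ∀ (k : ℕ) (N : ℤ), SignedRep k N →
    (3 * N = 4 ^ i - 1 ∨ 3 * N = 4 ^ i + 2) → i ≤ k := by
  induction i with
  | zero => intros; omega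
  | succ i ih =>
    intro k N h hN
    obtain ⟨m, hm⟩ : ∃ m : ℤ, (4 : ℤ) ^ i - 1 = 3 * m := by
      simpa [dvd_def] using sub_dvd_pow_sub_pow (4 : ℤ) 1 i
    rw [pow_succ] at hN
    have key : ∀ j, SignedRep j m ∨ SignedRep j (m + 1) → i ≤ j := by
      rintro j (h | h)
      · exact ih j _ h (.inl (by omega))
      · exact ih j _ h (.inr (by omega))
    rcases hN with hN | hN
    · obtain ⟨j, rfl, h | h⟩ := h.halve.2 (2 * m) (by omega)
      · have := key j (.inl (h.halve.1 m rfl))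
        omega
      · obtain ⟨l, rfl, h'⟩ := h.halve.2 m rfl
        have := key l h'
        omega
    · have h := h.halve.1 (2 * m + 1) (by omega)
      obtain ⟨l, rfl, h'⟩ := h.halve.2 m rfl
      have := key l h'
      omega

theorem SignedRep.of_sum {α : Type*} (s : Finset α) (f : α → ℤ)
    (hf : ∀ x ∈ s, f x = 0 ∨ ∃ a : ℕ, f x = 2 ^ a ∨ f x = -2 ^ a) :
    SignedRep s.card (∑ x ∈ s, f x) := by
  classical
  induction s using Finset.induction_on with
  | empty => simpa using SignedRep.zero
  | insert x s hx ih =>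
    rw [Finset.card_insert_of_notMem hx, Finset.sum_insert hx]
    have ih := ih fun y hy => hf y (Finset.mem_insert_of_mem hy)
    rcases hf x (Finset.mem_insert_self _ _) with h | ⟨a, h | h⟩
    · rw [h, zero_add]; exact ih.same
    · rw [h, add_comm (2 ^ a)]; exact ih.pos a
    · rw [h, neg_add_eq_sub]; exact ih.neg a

theorem PowerCircuit.eval_eq (P : PowerCircuit) (hP : P.Proper) (v : Fin P.n) :
    P.eval v = 0 ∨ ∃ a : ℕ, P.eval v = 2 ^ a := by
  have h := P.evalSpec v
  split_ifs at h with h0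
  · exact .inl h
  · right
    choose m hm using hP
    have hz : ∑ w, (P.lab v w : ℝ) * P.eval w = ((∑ w, P.lab v w * (m w : ℤ) : ℤ) : ℝ) := by
      push_cast
      exact Finset.sum_congr rfl fun w _ => by rw [hm w]
    rw [hz] at h
    generalize (∑ w, P.lab v w * (m w : ℤ) : ℤ) = z at h
    have hpos : 0 < P.eval v := by rw [h]; positivity
    have h1 : 1 ≤ P.eval v := by
      rw [hm v] at hpos ⊢
      exact_mod_cast hpos
    have hz0 : 0 ≤ z := by
      by_contra hc
      have : (2 : ℝ) ^ (z : ℝ) < 1 :=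
        Real.rpow_lt_one_of_one_lt_of_neg (by norm_num) (by exact_mod_cast not_le.mp hc)
      linarith
    lift z to ℕ using hz0
    refine ⟨z, ?_⟩
    rw [h]
    simp

/-- Every constant power circuit properly representing `N_i = (4^(i+1) - 1)/3`
has at least `i + 1` vertices. The condition `3 · ℰ(P) = 4^(i+1) - 1` states
exactly that `ℰ(P) = N_i`. -/
theorem circuit_for_N_i_has_many_vertices (i : ℕ) (P : PowerCircuit)
    (hP : P.Proper) (hval : 3 * P.value = 4 ^ (i + 1) - 1) :
    i + 1 ≤ P.n := by
  choose m hm using hP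
  have hrep := SignedRep.of_sum P.M (fun v => P.nu v * (m v : ℤ)) fun v hv => by
    rcases P.eval_eq (fun w => ⟨m w, hm w⟩) v with h | ⟨a, h⟩
    · left
      rw [hm v] at h
      have : m v = 0 := by exact_mod_cast h
      simp [this]
    · right
      rw [hm v] at h
      have h2 : (m v : ℤ) = 2 ^ a := by exact_mod_cast h
      refine ⟨a, ?_⟩
      rcases P.nuValid v hv with h1 | h1 <;> simp [h1, h2]
  have hv : P.value = ((∑ v ∈ P.M, P.nu v * (m v : ℤ) : ℤ) : ℝ) := by
    unfold PowerCircuit.value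
    push_cast
    exact Finset.sum_congr rfl fun w _ => by rw [hm w]
  rw [hv] at hval
  have hb := SignedRep.bound (i + 1) _ _ hrep (.inl (by exact_mod_cast hval))
  have hc := Finset.card_le_univ P.M
  rw [Fintype.card_fin] at hc
  omega
end
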